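/- arXiv:2412.15368 — 4 statements merged into one kernel-verified Lean document; each statement's English description precedes it below -/
import Mathlib

section
/- Let k be a field, A = k[a_1,a_2], p ≥ 3 an integer, and I = (a_1^p, a_2^p, a_1 a_2^{p-1}). Then SD(I) = {1, 2, …, p}, so st(I) = rt(I) = p. Concretely, for every n with 2 ≤ n ≤ p one has L_n ≠ V_1·L_{n-1}, and L_n = V_1·L_{n-1} for every n ≥ p+1. -/
/-- The `A`-submodule of homogeneous elements of degree `n` in the kernel `L` of the
presentation `φ : A[X_1,…,X_r] → A[t]`, `X_i ↦ x_i t`, of the Rees algebra of the ideal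
`I = (x_1,…,x_r)`; i.e. the degree-`n` equations `L_n` of the Rees algebra. -/
noncomputable def reesRel {A : Type*} [CommRing A] {r : ℕ} (x : Fin r → A) (n : ℕ) :
    Submodule A (MvPolynomial (Fin r) A) :=
  (RingHom.ker (MvPolynomial.aeval (fun i => Polynomial.C (x i) * Polynomial.X) :
      MvPolynomial (Fin r) A →ₐ[A] Polynomial A)).restrictScalars A
  ⊓ MvPolynomial.homogeneousSubmodule (Fin r) A n

/-- `E(I)_n = 0`, i.e. `L_n = V_1·L_{n-1}`: the degree-`n` equations of the Rees algebra
are generated by those of degree `n-1`. -/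
def reesRelStable {A : Type*} [CommRing A] {r : ℕ} (x : Fin r → A) (n : ℕ) : Prop :=
  reesRel x n = MvPolynomial.homogeneousSubmodule (Fin r) A 1 * reesRel x (n - 1)

/-- The set `SD(I) = {1} ∪ {n ≥ 2 : L_n ≠ V_1·L_{n-1}}` of sifted degrees. -/
def siftedDegrees {A : Type*} [CommRing A] {r : ℕ} (x : Fin r → A) : Set ℕ :=
  {1} ∪ {n : ℕ | 2 ≤ n ∧ ¬ reesRelStable x n}

/-- The sifted type `st(I) = card SD(I)`. -/
noncomputable def siftedType {A : Type*} [CommRing A] {r : ℕ} (x : Fin r → A) : ℕ :=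
  (siftedDegrees x).ncard

/-- The relation type `rt(I)`: the least `s ≥ 1` with `L_n = V_1·L_{n-1}` for all
`n ≥ s+1`. -/
noncomputable def relType {A : Type*} [CommRing A] {r : ℕ} (x : Fin r → A) : ℕ :=
  sInf {s : ℕ | 1 ≤ s ∧ ∀ n, s + 1 ≤ n → reesRelStable x n}

/-- Exponent vector of a monomial in two variables. -/
noncomputable def fsTwo (i j : ℕ) : Fin 2 →₀ ℕ := Finsupp.equivFunOnFinite.symm ![i, j]

/-- Exponent vector of a monomial in three variables. -/
noncomputable def fsThree (u v w : ℕ) : Fin 3 →₀ ℕ := Finsupp.equivFunOnFinite.symm ![u, v, w]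

/-- The monomial `a^i b^j X_0^u X_1^v X_2^w`. -/
noncomputable def mm (k : Type*) [Field k] (i j u v w : ℕ) :
    MvPolynomial (Fin 3) (MvPolynomial (Fin 2) k) :=
  MvPolynomial.monomial (fsThree u v w) (MvPolynomial.monomial (fsTwo i j) 1)

/-- The generators, with `p = q + 1`. -/
noncomputable def gens (k : Type*) [Field k] (q : ℕ) : Fin 3 → MvPolynomial (Fin 2) k :=
  ![MvPolynomial.X 0 ^ (q + 1), MvPolynomial.X 1 ^ (q + 1), MvPolynomial.X 0 * MvPolynomial.X 1 ^ q]

lemma fsTwo_eq (e : Fin 2 →₀ ℕ) : fsTwo (e 0) (e 1) = e := by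
  ext i; fin_cases i <;> rfl

lemma fsThree_eq (d : Fin 3 →₀ ℕ) : fsThree (d 0) (d 1) (d 2) = d := by
  ext i; fin_cases i <;> rfl

lemma fsTwo_inj {i j i' j' : ℕ} (h : fsTwo i j = fsTwo i' j') : i = i' ∧ j = j' :=
  ⟨DFunLike.congr_fun h 0, DFunLike.congr_fun h 1⟩

lemma fsTwo_add (i j i' j' : ℕ) : fsTwo i j + fsTwo i' j' = fsTwo (i + i') (j + j') := by
  ext i; fin_cases i <;> rfl

lemma fsThree_add (u v w u' v' w' : ℕ) :
    fsThree u v w + fsThree u' v' w' = fsThree (u + u') (v + v') (w + w') := by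
  ext i; fin_cases i <;> rfl

lemma degree_fsThree (u v w : ℕ) : (fsThree u v w).degree = u + v + w := by
  rw [Finsupp.degree_eq_sum, Fin.sum_univ_three]; rfl

lemma monomial_fsTwo {k : Type*} [Field k] (i j : ℕ) (c : k) :
    MvPolynomial.monomial (fsTwo i j) c
      = MvPolynomial.C c * (MvPolynomial.X 0 ^ i * MvPolynomial.X 1 ^ j) := by
  rw [MvPolynomial.monomial_eq, Finsupp.prod_fintype _ _ (by simp), Fin.prod_univ_two]; rfl

lemma gens_prod (k : Type*) [Field k] (q u v w : ℕ) :
    gens k q 0 ^ u * gens k q 1 ^ v * gens k q 2 ^ w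
      = MvPolynomial.monomial (fsTwo ((q + 1) * u + w) ((q + 1) * v + q * w)) 1 := by
  rw [monomial_fsTwo]
  simp only [gens, Matrix.cons_val]
  simp only [map_one, pow_add, pow_mul, mul_pow]
  ring

lemma aeval_mono {k : Type*} [Field k] (q u v w : ℕ) (c : MvPolynomial (Fin 2) k) :
    MvPolynomial.aeval (fun i => Polynomial.C (gens k q i) * Polynomial.X)
      (MvPolynomial.monomial (fsThree u v w) c)
    = Polynomial.C (c *
        MvPolynomial.monomial (fsTwo ((q + 1) * u + w) ((q + 1) * v + q * w)) 1)
        * Polynomial.X ^ (u + v + w) := by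
  rw [MvPolynomial.aeval_monomial, Finsupp.prod_fintype _ _ (by simp), Fin.prod_univ_three,
    ← gens_prod]
  change _ * ((_ : Polynomial _) ^ u * _ ^ v * _ ^ w) = _
  simp only [mul_pow, pow_add, Polynomial.algebraMap_eq, map_mul, map_pow]
  ring

lemma aeval_mm (k : Type*) [Field k] (q i j u v w : ℕ) :
    MvPolynomial.aeval (fun i => Polynomial.C (gens k q i) * Polynomial.X) (mm k i j u v w)
    = Polynomial.C (MvPolynomial.monomial
        (fsTwo (i + ((q + 1) * u + w)) (j + ((q + 1) * v + q * w))) 1)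
        * Polynomial.X ^ (u + v + w) := by
  rw [mm, aeval_mono, MvPolynomial.monomial_mul, fsTwo_add, mul_one]

lemma sub_mem_reesRel (k : Type*) [Field k] (q n i j u v w i' j' u' v' w' : ℕ)
    (hn : u + v + w = n) (hn' : u' + v' + w' = n)
    (h1 : i + ((q + 1) * u + w) = i' + ((q + 1) * u' + w'))
    (h2 : j + ((q + 1) * v + q * w) = j' + ((q + 1) * v' + q * w')) :
    mm k i j u v w - mm k i' j' u' v' w' ∈ reesRel (gens k q) n := by
  refine ⟨?_, ?_⟩
  · change _ ∈ RingHom.ker _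
    rw [RingHom.mem_ker, map_sub, aeval_mm, aeval_mm, h1, h2, hn, hn', sub_self]
  · refine Submodule.sub_mem _ ?_ ?_
    · exact MvPolynomial.isHomogeneous_monomial _ (by rw [degree_fsThree, hn])
    · exact MvPolynomial.isHomogeneous_monomial _ (by rw [degree_fsThree, hn'])

lemma X_mul_mem {A : Type*} [CommRing A] (x : Fin 3 → A) (n : ℕ) (r : Fin 3)
    {f : MvPolynomial (Fin 3) A} (hf : f ∈ reesRel x n) :
    MvPolynomial.X r * f ∈ MvPolynomial.homogeneousSubmodule (Fin 3) A 1 * reesRel x n :=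
  Submodule.mul_mem_mul (MvPolynomial.isHomogeneous_X _ _) hf

lemma X_zero_mul (k : Type*) [Field k] (i j u v w : ℕ) :
    MvPolynomial.X 0 * mm k i j u v w = mm k i j (u + 1) v w := by
  rw [mm, MvPolynomial.X, MvPolynomial.monomial_mul, one_mul, mm]
  congr 1
  rw [← fsThree_eq (Finsupp.single 0 1), fsThree_add]; simp [add_comm]

lemma X_one_mul (k : Type*) [Field k] (i j u v w : ℕ) :
    MvPolynomial.X 1 * mm k i j u v w = mm k i j u (v + 1) w := by
  rw [mm, MvPolynomial.X, MvPolynomial.monomial_mul, one_mul, mm]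
  congr 1
  rw [← fsThree_eq (Finsupp.single 1 1), fsThree_add]; simp [add_comm]

lemma X_two_mul (k : Type*) [Field k] (i j u v w : ℕ) :
    MvPolynomial.X 2 * mm k i j u v w = mm k i j u v (w + 1) := by
  rw [mm, MvPolynomial.X, MvPolynomial.monomial_mul, one_mul, mm]
  congr 1
  rw [← fsThree_eq (Finsupp.single 2 1), fsThree_add]; simp [add_comm]

lemma degree_of_hom {A : Type*} [CommRing A] {n : ℕ} {f : MvPolynomial (Fin 3) A}
    (hf : f.IsHomogeneous n) (d : Fin 3 →₀ ℕ) (hd : d ∈ f.support) : d.degree = n := by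
  have := hf (MvPolynomial.mem_support_iff.1 hd)
  rw [Finsupp.degree_eq_weight_one]; exact this

/-- Two monomials of degree `n + 1` with a common variable. -/
lemma common (k : Type*) [Field k] (q n i j u v w i' j' u' v' w' : ℕ)
    (hn : u + v + w = n + 1) (hn' : u' + v' + w' = n + 1)
    (h1 : i + ((q + 1) * u + w) = i' + ((q + 1) * u' + w'))
    (h2 : j + ((q + 1) * v + q * w) = j' + ((q + 1) * v' + q * w'))
    (hc : (0 < u ∧ 0 < u') ∨ (0 < v ∧ 0 < v') ∨ (0 < w ∧ 0 < w')) :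
    mm k i j u v w - mm k i' j' u' v' w' ∈
      MvPolynomial.homogeneousSubmodule (Fin 3) (MvPolynomial (Fin 2) k) 1
        * reesRel (gens k q) n := by
  rcases hc with ⟨h, h'⟩ | ⟨h, h'⟩ | ⟨h, h'⟩
  · obtain ⟨u, rfl⟩ := Nat.exists_eq_add_of_lt h
    obtain ⟨u', rfl⟩ := Nat.exists_eq_add_of_lt h'
    simp only [zero_add] at *
    rw [← X_zero_mul, ← X_zero_mul, ← mul_sub]
    exact X_mul_mem _ _ _ (sub_mem_reesRel k q n _ _ _ _ _ _ _ _ _ _ (by linarith) (by linarith)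
      (by linarith) (by linarith))
  · obtain ⟨v, rfl⟩ := Nat.exists_eq_add_of_lt h
    obtain ⟨v', rfl⟩ := Nat.exists_eq_add_of_lt h'
    simp only [zero_add] at *
    rw [← X_one_mul, ← X_one_mul, ← mul_sub]
    exact X_mul_mem _ _ _ (sub_mem_reesRel k q n _ _ _ _ _ _ _ _ _ _ (by linarith) (by linarith)
      (by linarith) (by linarith))
  · obtain ⟨w, rfl⟩ := Nat.exists_eq_add_of_lt h
    obtain ⟨w', rfl⟩ := Nat.exists_eq_add_of_lt h'
    simp only [zero_add] at *
    rw [← X_two_mul, ← X_two_mul, ← mul_sub]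
    exact X_mul_mem _ _ _ (sub_mem_reesRel k q n _ _ _ _ _ _ _ _ _ _ (by linarith) (by linarith)
      (by linarith) (by linarith))

/-- Linking through a third monomial. -/
lemma exists_link (q n i j u v w i' j' u' v' w' : ℕ) (hq : 1 ≤ q) (hqn : q + 1 ≤ n)
    (hn : u + v + w = n + 1) (hn' : u' + v' + w' = n + 1)
    (h1 : i + ((q + 1) * u + w) = i' + ((q + 1) * u' + w'))
    (h2 : j + ((q + 1) * v + q * w) = j' + ((q + 1) * v' + q * w'))
    (hc : (v = 0 ∧ w = 0) ∨ (u = 0 ∧ w = 0) ∨ (u = 0 ∧ v = 0))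
    (hd : ¬ ((0 < u ∧ 0 < u') ∨ (0 < v ∧ 0 < v') ∨ (0 < w ∧ 0 < w'))) :
    ∃ i'' j'' u'' v'' w'', u'' + v'' + w'' = n + 1 ∧
      i + ((q + 1) * u + w) = i'' + ((q + 1) * u'' + w'') ∧
      j + ((q + 1) * v + q * w) = j'' + ((q + 1) * v'' + q * w'') ∧
      ((0 < u ∧ 0 < u'') ∨ (0 < v ∧ 0 < v'') ∨ (0 < w ∧ 0 < w'')) ∧
      ((0 < u'' ∧ 0 < u') ∨ (0 < v'' ∧ 0 < v') ∨ (0 < w'' ∧ 0 < w')) := by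
  rcases hc with ⟨rfl, rfl⟩ | ⟨rfl, rfl⟩ | ⟨rfl, rfl⟩
  · obtain rfl : u = n + 1 := by omega
    obtain rfl : u' = 0 := by omega
    rcases Nat.eq_zero_or_pos w' with rfl | hw
    · obtain rfl : v' = n + 1 := by omega
      have : q + 1 ≤ j := by nlinarith
      obtain ⟨j, rfl⟩ := Nat.exists_eq_add_of_le this
      exact ⟨i + (q + 1), j, n, 1, 0, by ring, by ring, by ring, by omega, by omega⟩
    · have : q ≤ j := by nlinarith
      obtain ⟨j, rfl⟩ := Nat.exists_eq_add_of_le this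
      exact ⟨i + q, j, n, 0, 1, by ring, by ring, by ring, by omega, by omega⟩
  · obtain rfl : v = n + 1 := by omega
    obtain rfl : v' = 0 := by omega
    rcases Nat.eq_zero_or_pos u' with rfl | hu
    · obtain ⟨i, rfl⟩ := Nat.exists_eq_add_of_le (show 1 ≤ i by omega)
      exact ⟨i, j + 1, 0, n, 1, by ring, by ring, by ring, by omega, by omega⟩
    · have : q + 1 ≤ i := by nlinarith
      obtain ⟨i, rfl⟩ := Nat.exists_eq_add_of_le this
      exact ⟨i, j + (q + 1), 1, n, 0, by ring, by ring, by ring, by omega, by omega⟩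
  · obtain rfl : w = n + 1 := by omega
    obtain rfl : w' = 0 := by omega
    obtain ⟨n, rfl⟩ := Nat.exists_eq_add_of_le hqn
    exact ⟨i, j, 1, q, n + 1, by ring, by ring, by ring, by omega, by omega⟩

lemma pair_mem (k : Type*) [Field k] (q n i j u v w i' j' u' v' w' : ℕ) (hq : 1 ≤ q)
    (hqn : q + 1 ≤ n)
    (hn : u + v + w = n + 1) (hn' : u' + v' + w' = n + 1)
    (h1 : i + ((q + 1) * u + w) = i' + ((q + 1) * u' + w'))
    (h2 : j + ((q + 1) * v + q * w) = j' + ((q + 1) * v' + q * w')) :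
    mm k i j u v w - mm k i' j' u' v' w' ∈
      MvPolynomial.homogeneousSubmodule (Fin 3) (MvPolynomial (Fin 2) k) 1
        * reesRel (gens k q) n := by
  by_cases hd : (0 < u ∧ 0 < u') ∨ (0 < v ∧ 0 < v') ∨ (0 < w ∧ 0 < w')
  · exact common k q n _ _ _ _ _ _ _ _ _ _ hn hn' h1 h2 hd
  · by_cases hc : (v = 0 ∧ w = 0) ∨ (u = 0 ∧ w = 0) ∨ (u = 0 ∧ v = 0)
    · obtain ⟨i'', j'', u'', v'', w'', e1, e2, e3, e4, e5⟩ :=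
        exists_link q n _ _ _ _ _ _ _ _ _ _ hq hqn hn hn' h1 h2 hc hd
      rw [← sub_add_sub_cancel _ (mm k i'' j'' u'' v'' w'') _]
      exact Submodule.add_mem _ (common k q n _ _ _ _ _ _ _ _ _ _ hn e1 e2 e3 e4)
        (common k q n _ _ _ _ _ _ _ _ _ _ e1 hn' (e2 ▸ h1) (e3 ▸ h2) e5)
    · have hc' : (v' = 0 ∧ w' = 0) ∨ (u' = 0 ∧ w' = 0) ∨ (u' = 0 ∧ v' = 0) := by omega
      obtain ⟨i'', j'', u'', v'', w'', e1, e2, e3, e4, e5⟩ :=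
        exists_link q n _ _ _ _ _ _ _ _ _ _ hq hqn hn' hn h1.symm h2.symm hc' (by omega)
      rw [← neg_sub]
      refine Submodule.neg_mem _ ?_
      rw [← sub_add_sub_cancel _ (mm k i'' j'' u'' v'' w'') _]
      exact Submodule.add_mem _ (common k q n _ _ _ _ _ _ _ _ _ _ hn' e1 e2 e3 e4)
        (common k q n _ _ _ _ _ _ _ _ _ _ e1 hn (e2 ▸ h1.symm) (e3 ▸ h2.symm) e5)

/-- Abstract linear algebra: collapsing along fibres. -/
lemma collapse {k ι τ V : Type*} [Field k] [AddCommGroup V] [Module k V]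
    (M : Submodule k V) (s : Finset ι) (g : ι → τ) (b : ι → V) (c : ι → k)
    (hb : ∀ x ∈ s, ∀ y ∈ s, g x = g y → b x - b y ∈ M)
    (h0 : ∑ x ∈ s, Finsupp.single (g x) (c x) = 0) : ∑ x ∈ s, c x • b x ∈ M := by
  classical
  let σ : τ → V := fun t => if h : ∃ x ∈ s, g x = t then b h.choose else 0
  have hσ : ∀ x ∈ s, b x - σ (g x) ∈ M := by
    intro x hx
    have h : ∃ y ∈ s, g y = g x := ⟨x, hx, rfl⟩
    simp only [σ, dif_pos h]
    exact hb x hx _ h.choose_spec.1 h.choose_spec.2.symm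
  have h1 : ∑ x ∈ s, c x • σ (g x) = 0 := by
    have := congrArg (Finsupp.linearCombination k σ) h0
    simpa using this
  have h2 : ∑ x ∈ s, c x • b x = ∑ x ∈ s, c x • (b x - σ (g x)) := by
    simp only [smul_sub, Finset.sum_sub_distrib, h1, sub_zero]
  rw [h2]
  exact Submodule.sum_mem _ fun x hx => M.smul_mem _ (hσ x hx)

lemma mul_le_reesRel {A : Type*} [CommRing A] {r : ℕ} (x : Fin r → A) (n : ℕ) :
    MvPolynomial.homogeneousSubmodule (Fin r) A 1 * reesRel x n ≤ reesRel x (n + 1) := by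
  rw [Submodule.mul_le]
  rintro f hf g ⟨hg, hg'⟩
  refine ⟨Ideal.mul_mem_left _ _ hg, ?_⟩
  rw [add_comm]
  exact MvPolynomial.IsHomogeneous.mul hf hg'

lemma stable (k : Type*) [Field k] (q n : ℕ) (hq : 1 ≤ q) (hqn : q + 1 ≤ n) :
    reesRelStable (gens k q) (n + 1) := by
  refine le_antisymm ?_ (mul_le_reesRel _ _)
  rintro f ⟨hf, hf'⟩
  change f ∈ RingHom.ker _ at hf
  rw [RingHom.mem_ker] at hf
  change f.IsHomogeneous (n + 1) at hf'
  simp only [Nat.add_sub_cancel]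
  set M := MvPolynomial.homogeneousSubmodule (Fin 3) (MvPolynomial (Fin 2) k) 1
        * reesRel (gens k q) n with hM
  let s : Finset (Σ _ : Fin 3 →₀ ℕ, Fin 2 →₀ ℕ) :=
    f.support.sigma (fun d => (f.coeff d).support)
  let c : (Σ _ : Fin 3 →₀ ℕ, Fin 2 →₀ ℕ) → k := fun x => (f.coeff x.1).coeff x.2
  let b : (Σ _ : Fin 3 →₀ ℕ, Fin 2 →₀ ℕ) → MvPolynomial (Fin 3) (MvPolynomial (Fin 2) k) :=
    fun x => mm k (x.2 0) (x.2 1) (x.1 0) (x.1 1) (x.1 2)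
  let g : (Σ _ : Fin 3 →₀ ℕ, Fin 2 →₀ ℕ) → (Fin 2 →₀ ℕ) :=
    fun x => fsTwo (x.2 0 + ((q + 1) * x.1 0 + x.1 2)) (x.2 1 + ((q + 1) * x.1 1 + q * x.1 2))
  have hdeg : ∀ x ∈ s, x.1 0 + x.1 1 + x.1 2 = n + 1 := by
    intro x hx
    have hx1 := (Finset.mem_sigma.1 hx).1
    rw [← degree_fsThree, fsThree_eq]
    exact degree_of_hom hf' x.1 hx1
  have hfs : f = ∑ x ∈ s, c x • b x := by
    rw [Finset.sum_sigma]
    conv_lhs => rw [f.as_sum]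
    refine Finset.sum_congr rfl fun d hd => ?_
    conv_lhs => rw [(f.coeff d).as_sum, map_sum]
    refine Finset.sum_congr rfl fun e he => ?_
    simp only [b, c, mm, fsThree_eq, fsTwo_eq]
    rw [MvPolynomial.smul_monomial, MvPolynomial.smul_monomial, smul_eq_mul, mul_one]
  have h0 : ∑ x ∈ s, Finsupp.single (g x) (c x) = 0 := by
    have h1 : ∑ x ∈ s, MvPolynomial.monomial (g x) (c x) = 0 := by
      rw [hfs] at hf
      have := congrArg (Polynomial.eval 1) hf
      rw [map_sum, Polynomial.eval_finsetSum] at this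
      simp only [Polynomial.eval_zero] at this
      rw [← this]
      refine Finset.sum_congr rfl fun x hx => ?_
      have e : c x • b x = (MvPolynomial.C (c x) : MvPolynomial (Fin 2) k) • b x := by
        rw [← MvPolynomial.algebraMap_eq, algebraMap_smul]
      rw [e, map_smul, aeval_mm, Polynomial.eval_smul]
      simp only [Polynomial.eval_mul, Polynomial.eval_C, Polynomial.eval_pow, Polynomial.eval_X,
        one_pow, mul_one, smul_eq_mul]
      rw [MvPolynomial.C_mul_monomial, mul_one]
    have := congrArg (MvPolynomial.basisMonomials (Fin 2) k).repr h1
    rw [map_sum, map_zero] at this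
    rw [← this]
    refine Finset.sum_congr rfl fun x hx => ?_
    have e : MvPolynomial.monomial (g x) (c x)
        = c x • MvPolynomial.basisMonomials (Fin 2) k (g x) := by
      rw [MvPolynomial.coe_basisMonomials, MvPolynomial.smul_monomial, smul_eq_mul, mul_one]
    rw [e, map_smul, Module.Basis.repr_self, Finsupp.smul_single, smul_eq_mul, mul_one]
  rw [hfs]
  refine collapse (M.restrictScalars k) s g b c ?_ h0
  intro x hx y hy hxy
  obtain ⟨h1, h2⟩ := fsTwo_inj hxy
  exact pair_mem k q n _ _ _ _ _ _ _ _ _ _ hq hqn (hdeg x hx) (hdeg y hy) h1 h2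

/-- The coefficient of `a^i` in the coefficient of `X_2^n`, for `f ∈ L_n`, vanishes for
`i + n ≤ q`. -/
lemma coeff_zero (k : Type*) [Field k] (q n i : ℕ) (hi : i + n ≤ q)
    (f : MvPolynomial (Fin 3) (MvPolynomial (Fin 2) k)) (hf : f ∈ reesRel (gens k q) n) :
    (f.coeff (fsThree 0 0 n)).coeff (fsTwo i 0) = 0 := by
  classical
  obtain ⟨hf, hf'⟩ := hf
  change f ∈ RingHom.ker _ at hf
  rw [RingHom.mem_ker] at hf
  change f.IsHomogeneous n at hf'
  have h := congrArg (fun P => MvPolynomial.coeff (fsTwo (i + n) (q * n)) (Polynomial.eval 1 P)) hf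
  conv at h => lhs; rw [f.as_sum]
  simp only [map_sum, Polynomial.eval_finsetSum, Polynomial.eval_zero, MvPolynomial.coeff_zero,
    MvPolynomial.coeff_sum] at h
  have key : ∀ d : Fin 3 →₀ ℕ, MvPolynomial.coeff (fsTwo (i + n) (q * n)) (Polynomial.eval 1
      (MvPolynomial.aeval (fun i => Polynomial.C (gens k q i) * Polynomial.X)
        (MvPolynomial.monomial d (f.coeff d)))) =
      if fsTwo ((q + 1) * d 0 + d 2) ((q + 1) * d 1 + q * d 2) ≤ fsTwo (i + n) (q * n) then
        (f.coeff d).coeff (fsTwo (i + n) (q * n) -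
          fsTwo ((q + 1) * d 0 + d 2) ((q + 1) * d 1 + q * d 2)) else 0 := by
    intro d
    conv_lhs => rw [← fsThree_eq d]
    rw [aeval_mono]
    simp only [Polynomial.eval_mul, Polynomial.eval_C, Polynomial.eval_pow, Polynomial.eval_X,
        one_pow, mul_one, fsThree_eq]
    rw [MvPolynomial.coeff_mul_monomial']
    simp
  simp only [key] at h
  rw [Finset.sum_eq_single (fsThree 0 0 n)] at h
  · have e : fsTwo ((q + 1) * fsThree 0 0 n 0 + fsThree 0 0 n 2)
        ((q + 1) * fsThree 0 0 n 1 + q * fsThree 0 0 n 2) = fsTwo n (q * n) := by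
      simp [fsThree]
    have e2 : fsTwo (i + n) (q * n) = fsTwo i 0 + fsTwo n (q * n) := by
      rw [fsTwo_add, zero_add]
    rw [e, e2, if_pos (by simp), add_tsub_cancel_right] at h
    exact h
  · intro d hd hne
    refine if_neg fun hle => hne ?_
    have hdeg := degree_of_hom hf' d hd
    rw [← fsThree_eq d, degree_fsThree] at hdeg
    have l0 : (q + 1) * d 0 + d 2 ≤ i + n := hle 0
    have l1 : (q + 1) * d 1 + q * d 2 ≤ q * n := hle 1
    have z0 : d 0 = 0 := by
      by_contra hh
      have : 1 ≤ d 0 := by omega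
      nlinarith
    have z1 : d 1 = 0 := by
      rw [z0] at hdeg
      rw [← hdeg] at l1
      nlinarith
    rw [← fsThree_eq d, z0, z1]
    congr 1
    omega
  · intro hd
    rw [MvPolynomial.notMem_support_iff.1 hd]
    simp

lemma not_stable (k : Type*) [Field k] (q n : ℕ) (hn : 1 ≤ n) (hnq : n ≤ q) :
    ¬ reesRelStable (gens k q) (n + 1) := by
  classical
  intro hst
  unfold reesRelStable at hst
  rw [Nat.add_sub_cancel] at hst
  obtain ⟨i, rfl⟩ := Nat.exists_eq_add_of_le hnq
  have hmem : mm k i 0 0 0 (n + 1) - mm k 0 i 1 n 0 ∈ reesRel (gens k (n + i)) (n + 1) :=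
    sub_mem_reesRel k _ _ _ _ _ _ _ _ _ _ _ _ (by ring) (by ring) (by ring) (by ring)
  have hz : ∀ f ∈ reesRel (gens k (n + i)) (n + 1),
      (f.coeff (fsThree 0 0 (n + 1))).coeff (fsTwo i 0) = 0 := by
    intro f hf
    rw [hst] at hf
    induction hf using Submodule.mul_induction_on' with
    | mem_mul_mem g hg f hf =>
      rw [MvPolynomial.homogeneousSubmodule_one_eq_span_X] at hg
      induction hg using Submodule.span_induction generalizing f with
      | mem g hg =>
        obtain ⟨r, rfl⟩ := hg
        rw [MvPolynomial.coeff_X_mul']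
        split_ifs with hr
        · have hr2 : r = 2 := by
            rw [Finsupp.mem_support_iff] at hr
            fin_cases r
            · exact absurd rfl hr
            · exact absurd rfl hr
            · rfl
          subst hr2
          have e : fsThree 0 0 (n + 1) - Finsupp.single 2 1 = fsThree 0 0 n := by
            ext r
            fin_cases r <;> simp [fsThree]
          rw [e]
          exact coeff_zero k _ n i (by omega) f hf
        · simp
      | zero => simp
      | add g g' _ _ h h' =>
        rw [add_mul, MvPolynomial.coeff_add, MvPolynomial.coeff_add, h f hf, h' f hf, add_zero]
      | smul c g _ h =>
        rw [smul_mul_assoc, ← mul_smul_comm]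
        exact h _ (Submodule.smul_mem _ _ hf)
    | add x _ y _ hx hy => rw [MvPolynomial.coeff_add, MvPolynomial.coeff_add, hx, hy, add_zero]
  have := hz _ hmem
  rw [MvPolynomial.coeff_sub, mm, mm, MvPolynomial.coeff_monomial, MvPolynomial.coeff_monomial,
    if_pos rfl, if_neg] at this
  · simp at this
  · intro h
    have := DFunLike.congr_fun h 0
    simp [fsThree] at this

/-- For `A = k[a₁,a₂]`, `p ≥ 3`, and `I = (a₁^p, a₂^p, a₁a₂^{p-1})`:
`SD(I) = {1,2,…,p}`, so `st(I) = rt(I) = p`; concretely `L_n ≠ V_1·L_{n-1}` for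
`2 ≤ n ≤ p` and `L_n = V_1·L_{n-1}` for `n ≥ p+1`. -/
theorem stmt_11 {k : Type*} [Field k] (p : ℕ) (hp : 3 ≤ p) :
    let a₁ : MvPolynomial (Fin 2) k := MvPolynomial.X 0
    let a₂ : MvPolynomial (Fin 2) k := MvPolynomial.X 1
    let x : Fin 3 → MvPolynomial (Fin 2) k := ![a₁ ^ p, a₂ ^ p, a₁ * a₂ ^ (p - 1)]
    siftedDegrees x = Set.Icc 1 p ∧ siftedType x = p ∧ relType x = p ∧
    (∀ n, 2 ≤ n → n ≤ p → ¬ reesRelStable x n) ∧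
    (∀ n, p + 1 ≤ n → reesRelStable x n) := by
  intro a₁ a₂ x
  obtain ⟨q, rfl⟩ : ∃ q, p = q + 1 := ⟨p - 1, by omega⟩
  have hx : x = gens k q := rfl
  have h4 : ∀ n, 2 ≤ n → n ≤ q + 1 → ¬ reesRelStable x n := by
    intro n hn hn'
    obtain ⟨n, rfl⟩ : ∃ m, n = m + 1 := ⟨n - 1, by omega⟩
    exact not_stable k q n (by omega) (by omega)
  have h5 : ∀ n, q + 1 + 1 ≤ n → reesRelStable x n := by
    intro n hn
    obtain ⟨n, rfl⟩ : ∃ m, n = m + 1 := ⟨n - 1, by omega⟩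
    exact stable k q n (by omega) (by omega)
  have h1 : siftedDegrees x = Set.Icc 1 (q + 1) := by
    ext n
    simp only [siftedDegrees, Set.mem_union, Set.mem_singleton_iff, Set.mem_ofPred_eq, Set.mem_Icc]
    constructor
    · rintro (rfl | ⟨h2, hns⟩)
      · omega
      · refine ⟨by omega, ?_⟩
        by_contra hlt
        exact hns (h5 n (by omega))
    · rintro ⟨ha, hb⟩
      rcases Nat.eq_or_lt_of_le ha with h | h
      · exact Or.inl h.symm
      · exact Or.inr ⟨h, h4 n h hb⟩
  refine ⟨h1, ?_, ?_, h4, h5⟩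
  · rw [siftedType, h1, Set.ncard_eq_toFinset_card']
    simp
  · refine IsLeast.csInf_eq ⟨⟨by omega, h5⟩, ?_⟩
    rintro s ⟨hs, hs'⟩
    by_contra hlt
    exact h4 (q + 1) (by omega) le_rfl (hs' _ (by omega))
end

section
/- Let k be a field, A = k[a_1,a_2], p ≥ 5 an odd integer, and I = (a_1^p, a_2^p, a_1^2 a_2^{p-2}). Then SD(I) = {1, 2, …, (p-1)/2} ∪ {(p+1)/2, p}; hence st(I) = (p+3)/2 and rt(I) = p. -/
namespace Sift
open MvPolynomial

variable {k : Type*} [Field k]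

/-- the generators, with `p = q + 2` -/
noncomputable def gen (k : Type*) [Field k] (q : ℕ) : Fin 3 → MvPolynomial (Fin 2) k :=
  ![X 0 ^ (q + 2), X 1 ^ (q + 2), X 0 ^ 2 * X 1 ^ q]

/-- weight of a monomial -/
noncomputable def wt (q i j u v w : ℕ) : Fin 2 →₀ ℕ :=
  Finsupp.single 0 (i + (q + 2) * u + 2 * w) + Finsupp.single 1 (j + (q + 2) * v + q * w)

/-- exponents in the three variables -/
noncomputable def ex (u v w : ℕ) : Fin 3 →₀ ℕ :=
  Finsupp.single 0 u + Finsupp.single 1 v + Finsupp.single 2 w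

/-- exponents in the two variables -/
noncomputable def ex2 (i j : ℕ) : Fin 2 →₀ ℕ :=
  Finsupp.single 0 i + Finsupp.single 1 j

/-- monomials of `V` -/
noncomputable def mon (k : Type*) [Field k] (i j u v w : ℕ) :
    MvPolynomial (Fin 3) (MvPolynomial (Fin 2) k) :=
  monomial (ex u v w) (monomial (ex2 i j) 1)

lemma ex_eq (e : Fin 3 →₀ ℕ) : ex (e 0) (e 1) (e 2) = e := by
  ext s; fin_cases s <;> simp [ex]

lemma ex2_eq (e : Fin 2 →₀ ℕ) : ex2 (e 0) (e 1) = e := by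
  ext s; fin_cases s <;> simp [ex2]

lemma ex_deg (u v w : ℕ) : (ex u v w).degree = u + v + w := by
  simp [ex]

lemma deg_eq (e : Fin 3 →₀ ℕ) : e.degree = e 0 + e 1 + e 2 := by
  conv_lhs => rw [← ex_eq e]
  exact ex_deg _ _ _

/-- the presentation -/
noncomputable abbrev phi (k : Type*) [Field k] (q : ℕ) :
    MvPolynomial (Fin 3) (MvPolynomial (Fin 2) k) →ₐ[MvPolynomial (Fin 2) k]
      Polynomial (MvPolynomial (Fin 2) k) :=
  MvPolynomial.aeval (fun i => Polynomial.C (gen k q i) * Polynomial.X)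

lemma phi_monomial (q : ℕ) (e : Fin 3 →₀ ℕ) (c : MvPolynomial (Fin 2) k) :
    phi k q (monomial e c) =
      Polynomial.C (c * monomial (wt q 0 0 (e 0) (e 1) (e 2)) 1) * Polynomial.X ^ e.degree := by
  have h : (monomial (wt q 0 0 (e 0) (e 1) (e 2)) (1 : k)) =
      (X 0 ^ (q + 2)) ^ e 0 * (X 1 ^ (q + 2)) ^ e 1 * (X 0 ^ 2 * X 1 ^ q) ^ e 2 := by
    simp only [wt, X, monomial_pow, monomial_mul, one_pow, mul_one]
    refine congrArg (fun z => monomial z (1 : k)) ?_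
    ext s; fin_cases s <;> simp <;> ring
  rw [phi, aeval_monomial, Finsupp.prod_fintype _ _ (by simp), h, deg_eq]
  simp only [Fin.prod_univ_three, gen, Polynomial.algebraMap_eq]
  simp only [Matrix.cons_val, map_mul, map_pow]
  ring

lemma mem_rel (q n : ℕ) (f : MvPolynomial (Fin 3) (MvPolynomial (Fin 2) k)) :
    f ∈ reesRel (gen k q) n ↔ phi k q f = 0 ∧ f.IsHomogeneous n := by
  simp [reesRel, Submodule.mem_inf, RingHom.mem_ker, mem_homogeneousSubmodule]

lemma phi_mon (q i j u v w : ℕ) : phi k q (mon k i j u v w) =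
    Polynomial.C (monomial (wt q i j u v w) 1) * Polynomial.X ^ (u + v + w) := by
  rw [mon, phi_monomial, ex_deg, monomial_mul, one_mul]
  congr 2
  refine congrArg (fun z => monomial z (1 : k)) ?_
  ext s; fin_cases s <;> simp [ex, ex2, wt] <;> ring

lemma mon_hom (i j u v w : ℕ) : (mon k i j u v w).IsHomogeneous (u + v + w) := by
  apply isHomogeneous_monomial
  exact ex_deg _ _ _

lemma X_mul_mon (i j u v w : ℕ) : X 0 * mon k i j u v w = mon k i j (u+1) v w ∧
   X 1 * mon k i j u v w = mon k i j u (v+1) w ∧ X 2 * mon k i j u v w = mon k i j u v (w+1) := by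
  refine ⟨?_, ?_, ?_⟩ <;>
  · simp only [mon, X, monomial_mul, one_mul]
    refine congrArg (fun z => monomial z (monomial (ex2 i j) (1 : k))) ?_
    ext s; fin_cases s <;> simp [ex] <;> ring

/-- coefficient vanishing -/
lemma coeff_zero (q m i j : ℕ) (h : MvPolynomial (Fin 3) (MvPolynomial (Fin 2) k))
    (hh : h ∈ reesRel (gen k q) m)
    (H : ∀ u v w, u + v + w = m → (q + 2) * u + 2 * w ≤ i + 2 * m →
      (q + 2) * v + q * w ≤ j + q * m → w = m) :
    coeff (ex2 i j) (coeff (ex 0 0 m) h) = 0 := by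
  obtain ⟨h0, h1⟩ := (mem_rel _ _ _).1 hh
  have h2 : phi k q h = ∑ e ∈ h.support, phi k q (monomial e (coeff e h)) := by
    conv_lhs => rw [h.as_sum, map_sum]
  rw [h0] at h2
  simp only [phi_monomial] at h2
  have h3 := congrArg (fun P => coeff (wt q i j 0 0 m) (Polynomial.coeff P m)) h2
  simp only [Polynomial.finsetSum_coeff, coeff_sum, Polynomial.coeff_C_mul,
    Polynomial.coeff_zero, coeff_zero, Polynomial.coeff_X_pow] at h3
  rw [Finset.sum_eq_single (ex 0 0 m)] at h3
  · rw [ex_deg] at h3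
    simp only [zero_add, if_true, mul_one] at h3
    have : wt q i j 0 0 m = ex2 i j + wt q 0 0 ((ex 0 0 m) 0) ((ex 0 0 m) 1) ((ex 0 0 m) 2) := by
      ext s; fin_cases s <;> simp [ex, ex2, wt]
    rw [this, coeff_mul_monomial, mul_one] at h3
    exact h3.symm
  · intro e he hne
    have hd : e.degree = m := by
      by_contra hd
      exact (mem_support_iff.1 he) (h1.coeff_eq_zero hd)
    rw [if_pos hd.symm, mul_one, coeff_mul_monomial', if_neg]
    intro hle
    apply hne
    rw [deg_eq] at hd
    have l0 := hle 0
    have l1 := hle 1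
    simp [wt] at l0 l1
    have := H _ _ _ hd l0 l1
    rw [← ex_eq e]
    congr 1 <;> omega
  · intro he
    rw [notMem_support_iff.1 he]
    simp

lemma not_stable (q n i j u v : ℕ) (hn : 1 ≤ n) (huv : u + v = n)
    (h1 : (q + 2) * u ≤ i + 2 * n) (h2 : (q + 2) * v ≤ j + q * n)
    (H : ∀ u v w, u + v + w = n - 1 → (q + 2) * u + 2 * w ≤ i + 2 * (n - 1) →
      (q + 2) * v + q * w ≤ j + q * (n - 1) → w = n - 1) :
    ¬ reesRelStable (gen k q) n := by
  intro hs
  have key : ∀ g ∈ reesRel (gen k q) n, coeff (ex2 i j) (coeff (ex 0 0 n) g) = 0 := by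
    intro g hg
    rw [hs] at hg
    induction hg using Submodule.mul_induction_on' with
    | mem_mul_mem l hl h hh =>
      rw [mem_homogeneousSubmodule] at hl
      have : coeff (ex 0 0 n) (l * h) = coeff (ex 0 0 (n-1)) (coeff (ex 0 0 1) l • h) := by
        rw [coeff_mul, Finset.sum_eq_single (ex 0 0 1, ex 0 0 (n-1))]
        · simp
        · rintro ⟨a, b⟩ hab hne
          rw [Finset.HasAntidiagonal.mem_antidiagonal] at hab
          simp only at hab ⊢
          by_cases hd : a.degree = 1
          · exfalso; apply hne
            have e0 := DFunLike.congr_fun hab 0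
            have e1 := DFunLike.congr_fun hab 1
            have e2 := DFunLike.congr_fun hab 2
            rw [deg_eq] at hd
            simp [ex] at e0 e1 e2
            rw [← ex_eq a, ← ex_eq b]
            rw [Prod.mk.injEq]
            constructor <;> congr 1 <;> omega
          · rw [hl.coeff_eq_zero hd, zero_mul]
        · intro hno
          exfalso; apply hno
          rw [Finset.HasAntidiagonal.mem_antidiagonal]
          ext s; fin_cases s <;> simp [ex]; omega
      rw [this]
      exact coeff_zero q (n-1) i j _ (Submodule.smul_mem _ _ hh) H
    | add x hx y hy h1 h2 => simp [h1, h2]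
  have hf : mon k i j 0 0 n - mon k (i + 2 * n - (q+2)*u) (j + q * n - (q+2)*v) u v 0
      ∈ reesRel (gen k q) n := by
    rw [mem_rel]
    constructor
    · rw [map_sub, phi_mon, phi_mon, sub_eq_zero]
      congr 2
      · refine congrArg (fun z => monomial z (1 : k)) ?_
        ext s; fin_cases s <;> simp [wt] <;> omega
      · omega
    · have a1 := mon_hom (k := k) i j 0 0 n
      have a2 := mon_hom (k := k) (i + 2 * n - (q+2)*u) (j + q * n - (q+2)*v) u v 0
      rw [show 0 + 0 + n = n by omega] at a1
      rw [show u + v + 0 = n by omega] at a2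
      exact a1.sub a2
  have := key _ hf
  have hne : ex u v 0 ≠ ex 0 0 n := by
    intro h
    have e2 := DFunLike.congr_fun h 2
    simp [ex] at e2
    omega
  simp [mon, coeff_monomial, hne] at this


/-- two exponent triples share a variable -/
def Sh (u v w u' v' w' : ℕ) : Prop := (1 ≤ u ∧ 1 ≤ u') ∨ (1 ≤ v ∧ 1 ≤ v') ∨ (1 ≤ w ∧ 1 ≤ w')

lemma wt_inj {q i j u v w i' j' u' v' w' : ℕ} : wt q i j u v w = wt q i' j' u' v' w' ↔
    (i + (q + 2) * u + 2 * w = i' + (q + 2) * u' + 2 * w') ∧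
    (j + (q + 2) * v + q * w = j' + (q + 2) * v' + q * w') := by
  constructor
  · intro h
    have h0 := DFunLike.congr_fun h 0
    have h1 := DFunLike.congr_fun h 1
    simpa [wt] using And.intro h0 h1
  · rintro ⟨h0, h1⟩
    simp [wt, h0, h1]

lemma sub_mem_rel {q i j u v w i' j' u' v' w' n : ℕ} (h1 : u + v + w = n) (h2 : u' + v' + w' = n)
    (hw : wt q i j u v w = wt q i' j' u' v' w') :
    mon k i j u v w - mon k i' j' u' v' w' ∈ reesRel (gen k q) n := by
  rw [mem_rel]
  constructor
  · rw [map_sub, phi_mon, phi_mon, sub_eq_zero, hw, h1, h2]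
  · have a1 := mon_hom (k := k) i j u v w
    have a2 := mon_hom (k := k) i' j' u' v' w'
    rw [h1] at a1
    rw [h2] at a2
    exact a1.sub a2

lemma share_mem {q i j u v w i' j' u' v' w' n : ℕ} (h1 : u + v + w = n) (h2 : u' + v' + w' = n)
    (hw : wt q i j u v w = wt q i' j' u' v' w') (hs : Sh u v w u' v' w') :
    mon k i j u v w - mon k i' j' u' v' w' ∈
      homogeneousSubmodule (Fin 3) (MvPolynomial (Fin 2) k) 1 * reesRel (gen k q) (n - 1) := by
  rw [wt_inj] at hw
  rcases hs with ⟨ha, hb⟩ | ⟨ha, hb⟩ | ⟨ha, hb⟩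
  · obtain ⟨a, rfl⟩ := Nat.exists_eq_add_of_le' ha
    obtain ⟨b, rfl⟩ := Nat.exists_eq_add_of_le' hb
    rw [← (X_mul_mon _ _ _ _ _).1, ← (X_mul_mon _ _ _ _ _).1, ← mul_sub]
    refine Submodule.mul_mem_mul ?_ (sub_mem_rel (by omega) (by omega) ?_)
    · exact isHomogeneous_X _ _
    · rw [wt_inj]; constructor <;> linarith
  · obtain ⟨a, rfl⟩ := Nat.exists_eq_add_of_le' ha
    obtain ⟨b, rfl⟩ := Nat.exists_eq_add_of_le' hb
    rw [← (X_mul_mon _ _ _ _ _).2.1, ← (X_mul_mon _ _ _ _ _).2.1, ← mul_sub]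
    refine Submodule.mul_mem_mul ?_ (sub_mem_rel (by omega) (by omega) ?_)
    · exact isHomogeneous_X _ _
    · rw [wt_inj]; constructor <;> linarith
  · obtain ⟨a, rfl⟩ := Nat.exists_eq_add_of_le' ha
    obtain ⟨b, rfl⟩ := Nat.exists_eq_add_of_le' hb
    rw [← (X_mul_mon _ _ _ _ _).2.2, ← (X_mul_mon _ _ _ _ _).2.2, ← mul_sub]
    refine Submodule.mul_mem_mul ?_ (sub_mem_rel (by omega) (by omega) ?_)
    · exact isHomogeneous_X _ _
    · rw [wt_inj]; constructor <;> linarith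

/-- any two exponents have a common neighbour -/
def Good (q n : ℕ) : Prop := ∀ (u v w u' v' w' : ℕ) (lo hi : ℤ), u + v + w = n → u' + v' + w' = n →
  lo ≤ q * u - 2 * v → (q * u - 2 * v : ℤ) ≤ hi →
  lo ≤ q * u' - 2 * v' → (q * u' - 2 * v' : ℤ) ≤ hi →
  ∃ u'' v'' w'' : ℕ, u'' + v'' + w'' = n ∧ lo ≤ q * u'' - 2 * v'' ∧ (q * u'' - 2 * v'' : ℤ) ≤ hi ∧
    Sh u v w u'' v'' w'' ∧ Sh u'' v'' w'' u' v' w'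

lemma conn {q i j u v w i' j' u' v' w' n : ℕ} (hg : Good q n)
    (h1 : u + v + w = n) (h2 : u' + v' + w' = n)
    (hw : wt q i j u v w = wt q i' j' u' v' w') :
    mon k i j u v w - mon k i' j' u' v' w' ∈
      homogeneousSubmodule (Fin 3) (MvPolynomial (Fin 2) k) 1 * reesRel (gen k q) (n - 1) := by
  obtain ⟨e1, e2⟩ := wt_inj.1 hw
  have z1 : (u : ℤ) + v + w = n := by exact_mod_cast h1
  have z2 : (u' : ℤ) + v' + w' = n := by exact_mod_cast h2
  have f1 : (i : ℤ) + (q + 2) * u + 2 * w = i' + (q + 2) * u' + 2 * w' := by exact_mod_cast e1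
  have f2 : (j : ℤ) + (q + 2) * v + q * w = j' + (q + 2) * v' + q * w' := by exact_mod_cast e2
  have w1 : (w : ℤ) = n - u - v := by linarith
  have w2 : (w' : ℤ) = n - u' - v' := by linarith
  obtain ⟨u'', v'', w'', h3, l1, l2, s1, s2⟩ := hg u v w u' v' w'
    (q * u - 2 * v - j) (i + q * u - 2 * v) h1 h2 (by linarith) (by linarith)
    (by rw [w1, w2] at f2; linarith) (by rw [w1, w2] at f1; linarith)
  have w3 : (w'' : ℤ) = n - u'' - v'' := by
    have : (u'' : ℤ) + v'' + w'' = n := by exact_mod_cast h3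
    linarith
  have b1 : (q + 2) * u'' + 2 * w'' ≤ i + (q + 2) * u + 2 * w := by
    zify; rw [w3, w1]; linarith
  have b2 : (q + 2) * v'' + q * w'' ≤ j + (q + 2) * v + q * w := by
    zify; rw [w3, w1]; linarith
  obtain ⟨i'', hi⟩ := Nat.exists_eq_add_of_le' b1
  obtain ⟨j'', hj⟩ := Nat.exists_eq_add_of_le' b2
  have c1 := share_mem (k := k) (q := q) (i := i) (j := j) (i' := i'') (j' := j'') h1 h3
    (wt_inj.2 ⟨by linarith, by linarith⟩) s1
  have c2 := share_mem (k := k) (q := q) (i := i'') (j := j'') (i' := i') (j' := j') h3 h2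
    (wt_inj.2 ⟨by linarith, by linarith⟩) s2
  have := Submodule.add_mem _ c1 c2
  rwa [sub_add_sub_cancel] at this

lemma stable {q n : ℕ} (hn : 1 ≤ n) (hg : Good q n) : reesRelStable (gen k q) n := by
  apply le_antisymm
  · intro f hf
    obtain ⟨hf0, hf1⟩ := (mem_rel _ _ _).1 hf
    set M := homogeneousSubmodule (Fin 3) (MvPolynomial (Fin 2) k) 1 * reesRel (gen k q) (n - 1)
      with hM
    have hex : ∀ d, ∃ g : MvPolynomial (Fin 3) (MvPolynomial (Fin 2) k),
        ∀ i j u v w, u + v + w = n → wt q i j u v w = d → mon k i j u v w - g ∈ M := by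
      intro d
      by_cases h : ∃ i j u v w, u + v + w = n ∧ wt q i j u v w = d
      · obtain ⟨i, j, u, v, w, h1, rfl⟩ := h
        exact ⟨mon k i j u v w, fun i' j' u' v' w' h2 h3 => conn hg h2 h1 h3⟩
      · exact ⟨0, fun i j u v w h1 h2 => (h ⟨i, j, u, v, w, h1, h2⟩).elim⟩
    choose G hG using hex
    let rho := (basisMonomials (Fin 2) k).constr k G
    have hrho : ∀ d r, rho (monomial d r) = r • G d := by
      intro d r
      have : monomial d r = r • basisMonomials (Fin 2) k d := by
        simp [smul_monomial]
      rw [this, map_smul, Module.Basis.constr_basis]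
    have key : ∀ e : Fin 3 →₀ ℕ, e.degree = n → ∀ c : MvPolynomial (Fin 2) k,
        monomial e c - rho ((phi k q (monomial e c)).coeff n) ∈ M := by
      intro e he c
      induction c using MvPolynomial.induction_on' with
      | monomial d r =>
        rw [phi_monomial, Polynomial.coeff_C_mul, Polynomial.coeff_X_pow, if_pos he.symm, mul_one,
          monomial_mul, mul_one, hrho]
        have h1 := hG (d + wt q 0 0 (e 0) (e 1) (e 2)) (d 0) (d 1) (e 0) (e 1) (e 2)
          (by rw [← deg_eq, he]) (by ext s; fin_cases s <;> simp [wt] <;> ring)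
        have h2 := M.smul_mem (C r) h1
        convert h2 using 1
        rw [smul_sub, mon, ex_eq, ex2_eq, smul_monomial, smul_eq_mul, C_mul_monomial, mul_one]
        congr 1
        rw [← algebraMap_eq, algebraMap_smul]
      | add a b ha hb =>
        have := M.add_mem ha hb
        convert this using 1
        simp only [map_add, Polynomial.coeff_add]
        abel
    have h2 : f - rho ((phi k q f).coeff n) ∈ M := by
      have : f - rho ((phi k q f).coeff n) = ∑ e ∈ f.support, (monomial e (coeff e f)
          - rho ((phi k q (monomial e (coeff e f))).coeff n)) := by
        rw [Finset.sum_sub_distrib, ← map_sum, ← Polynomial.finsetSum_coeff, ← map_sum,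
          ← f.as_sum]
      rw [this]
      refine Submodule.sum_mem _ fun e he => key e ?_ _
      by_contra hd
      exact (mem_support_iff.1 he) (hf1.coeff_eq_zero hd)
    rw [hf0] at h2
    simpa using h2
  · rw [Submodule.mul_le]
    intro l hl h hh
    obtain ⟨hf0, hf1⟩ := (mem_rel _ _ _).1 hh
    rw [mem_rel]
    refine ⟨by rw [map_mul, hf0, mul_zero], ?_⟩
    have := IsHomogeneous.mul ((mem_homogeneousSubmodule _ _).1 hl) hf1
    rwa [show 1 + (n - 1) = n by omega] at this

lemma Sh.symm' {u v w u' v' w' : ℕ} (h : Sh u v w u' v' w') : Sh u' v' w' u v w := by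
  unfold Sh at *; omega

lemma good {c n : ℕ} (hn : c + 3 ≤ n) (hn' : n ≠ 2 * c + 3) : Good (2 * c + 1) n := by
  have A : ∀ (u v : ℕ) (lo hi : ℤ), u + v = n → lo ≤ 0 → 0 ≤ hi →
      lo ≤ ((2 * c + 1 : ℕ) : ℤ) * u - 2 * v → (((2 * c + 1 : ℕ) : ℤ) * u - 2 * v : ℤ) ≤ hi →
      ∃ u'' v'' w'' : ℕ, u'' + v'' + w'' = n ∧ lo ≤ ((2 * c + 1 : ℕ) : ℤ) * u'' - 2 * v'' ∧
      (((2 * c + 1 : ℕ) : ℤ) * u'' - 2 * v'' : ℤ) ≤ hi ∧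
      Sh 0 0 n u'' v'' w'' ∧ Sh u'' v'' w'' u v 0 := by
    intro u v lo hi huv h1 h2 h3 h4
    push_cast at *
    rcases Nat.eq_zero_or_pos u with rfl | hu
    · refine ⟨0, 1, n - 1, by omega, ?_, ?_, ?_, ?_⟩
      · push_cast at *; linarith
      · push_cast at *; linarith
      · unfold Sh; omega
      · unfold Sh; omega
    rcases Nat.eq_zero_or_pos v with rfl | hv
    · refine ⟨1, 0, n - 1, by omega, ?_, ?_, ?_, ?_⟩
      · push_cast at *; linarith
      · have : (1 : ℤ) ≤ u := by exact_mod_cast hu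
        push_cast at *; nlinarith
      · unfold Sh; omega
      · unfold Sh; omega
    rcases lt_trichotomy ((2 * c + 1 : ℤ) * u - 2 * v) 0 with hD | hD | hD
    · refine ⟨1, c + 1, n - c - 2, by omega, ?_, ?_, ?_, ?_⟩
      · push_cast; linarith
      · push_cast; linarith
      · unfold Sh; omega
      · unfold Sh; omega
    · have hD' : (2 * c + 1) * u = 2 * v := by
        zify; linarith
      have h2u : 2 ∣ u := by
        have : 2 ∣ (2 * c + 1) * u := ⟨v, hD'⟩
        exact (Nat.Coprime.dvd_mul_left (by simp)).1 this
      obtain ⟨e, rfl⟩ := h2u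
      have hv' : v = (2 * c + 1) * e := by nlinarith
      have hne : n = (2 * c + 3) * e := by rw [← huv, hv']; ring
      have he : 2 ≤ e := by
        by_contra hlt
        have : e = 0 ∨ e = 1 := by omega
        rcases this with rfl | rfl <;> omega
      have : (2 * c + 3) * 2 ≤ n := by rw [hne]; gcongr
      refine ⟨2, 2 * c + 1, n - (2 * c + 3), by omega, ?_, ?_, ?_, ?_⟩
      · push_cast; linarith
      · push_cast; linarith
      · unfold Sh; omega
      · unfold Sh; omega
    · refine ⟨1, c, n - c - 1, by omega, ?_, ?_, ?_, ?_⟩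
      · push_cast; linarith
      · push_cast; linarith
      · unfold Sh; omega
      · unfold Sh; omega
  have B : ∀ (u w : ℕ) (lo hi : ℤ), u + w = n → lo ≤ -2 * n →
      (((2 * c + 1 : ℕ) : ℤ) * u : ℤ) ≤ hi →
      ∃ u'' v'' w'' : ℕ, u'' + v'' + w'' = n ∧ lo ≤ ((2 * c + 1 : ℕ) : ℤ) * u'' - 2 * v'' ∧
      (((2 * c + 1 : ℕ) : ℤ) * u'' - 2 * v'' : ℤ) ≤ hi ∧
      Sh 0 n 0 u'' v'' w'' ∧ Sh u'' v'' w'' u 0 w := by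
    intro u w lo hi huw h1 h2
    push_cast at *
    have hz : (u : ℤ) + w = n := by exact_mod_cast huw
    have hn3 : (c : ℤ) + 3 ≤ n := by exact_mod_cast hn
    rcases Nat.eq_zero_or_pos w with rfl | hw
    · refine ⟨1, n - 1, 0, by omega, ?_, ?_, ?_, ?_⟩
      · push_cast [show 1 ≤ n by omega]; linarith
      · push_cast [show 1 ≤ n by omega]; push_cast at hz; nlinarith
      · unfold Sh; omega
      · unfold Sh; omega
    rcases Nat.eq_zero_or_pos u with rfl | hu
    · refine ⟨0, 1, n - 1, by omega, ?_, ?_, ?_, ?_⟩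
      · push_cast at *; linarith
      · push_cast at *; linarith
      · unfold Sh; omega
      · unfold Sh; omega
    · refine ⟨0, u, w, by omega, ?_, ?_, ?_, ?_⟩
      · push_cast at *; linarith
      · push_cast at *; nlinarith
      · unfold Sh; omega
      · unfold Sh; omega
  have D : ∀ (v w : ℕ) (lo hi : ℤ), v + w = n → lo ≤ -2 * v →
      (((2 * c + 1 : ℕ) : ℤ) * n : ℤ) ≤ hi →
      ∃ u'' v'' w'' : ℕ, u'' + v'' + w'' = n ∧ lo ≤ ((2 * c + 1 : ℕ) : ℤ) * u'' - 2 * v'' ∧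
      (((2 * c + 1 : ℕ) : ℤ) * u'' - 2 * v'' : ℤ) ≤ hi ∧
      Sh n 0 0 u'' v'' w'' ∧ Sh u'' v'' w'' 0 v w := by
    intro v w lo hi hvw h1 h2
    push_cast at *
    have hz : (v : ℤ) + w = n := by exact_mod_cast hvw
    have hn3 : (c : ℤ) + 3 ≤ n := by exact_mod_cast hn
    rcases Nat.eq_zero_or_pos w with rfl | hw
    · refine ⟨1, n - 1, 0, by omega, ?_, ?_, ?_, ?_⟩
      · push_cast [show 1 ≤ n by omega]; push_cast at hz; linarith
      · push_cast [show 1 ≤ n by omega]; nlinarith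
      · unfold Sh; omega
      · unfold Sh; omega
    rcases Nat.eq_zero_or_pos v with rfl | hv
    · refine ⟨1, 0, n - 1, by omega, ?_, ?_, ?_, ?_⟩
      · push_cast at *; linarith
      · push_cast at *; nlinarith
      · unfold Sh; omega
      · unfold Sh; omega
    · refine ⟨v, 0, w, by omega, ?_, ?_, ?_, ?_⟩
      · push_cast at *; nlinarith
      · push_cast at *; nlinarith
      · unfold Sh; omega
      · unfold Sh; omega
  intro u v w u' v' w' lo hi h1 h2 l1 l2 l3 l4
  by_cases hS : Sh u v w u' v' w'
  · exact ⟨u, v, w, h1, l1, l2, by unfold Sh; omega, hS⟩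
  have hu : u = 0 ∨ u' = 0 := by unfold Sh at hS; omega
  have hv : v = 0 ∨ v' = 0 := by unfold Sh at hS; omega
  have hw : w = 0 ∨ w' = 0 := by unfold Sh at hS; omega
  have flip : (∃ u'' v'' w'' : ℕ, u'' + v'' + w'' = n ∧
      lo ≤ ((2 * c + 1 : ℕ) : ℤ) * u'' - 2 * v'' ∧
      (((2 * c + 1 : ℕ) : ℤ) * u'' - 2 * v'' : ℤ) ≤ hi ∧
      Sh u' v' w' u'' v'' w'' ∧ Sh u'' v'' w'' u v w) →
      ∃ u'' v'' w'' : ℕ, u'' + v'' + w'' = n ∧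
      lo ≤ ((2 * c + 1 : ℕ) : ℤ) * u'' - 2 * v'' ∧
      (((2 * c + 1 : ℕ) : ℤ) * u'' - 2 * v'' : ℤ) ≤ hi ∧
      Sh u v w u'' v'' w'' ∧ Sh u'' v'' w'' u' v' w' := by
    rintro ⟨a, b, d, e1, e2, e3, e4, e5⟩
    exact ⟨a, b, d, e1, e2, e3, e5.symm', e4.symm'⟩
  rcases hu with rfl | rfl <;> rcases hv with rfl | rfl <;> rcases hw with rfl | rfl
  · omega
  · obtain rfl : w = n := by omega
    exact A u' v' lo hi (by omega) (by simpa using l1) (by simpa using l2) l3 l4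
  · obtain rfl : v = n := by omega
    exact B u' w' lo hi (by omega) (by push_cast at l1; linarith) (by push_cast at l4 ⊢; linarith)
  · obtain rfl : u' = n := by omega
    exact flip (D v w lo hi (by omega) (by push_cast at l1; linarith)
      (by push_cast at l4 ⊢; linarith))
  · obtain rfl : u = n := by omega
    exact D v' w' lo hi (by omega) (by push_cast at l3; linarith) (by push_cast at l2 ⊢; linarith)
  · obtain rfl : v' = n := by omega
    exact flip (B u w lo hi (by omega) (by push_cast at l3; linarith)
      (by push_cast at l2 ⊢; linarith))
  · obtain rfl : w' = n := by omega
    exact flip (A u v lo hi (by omega) (by simpa using l3) (by simpa using l4) l1 l2)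
  · omega

/-- the bad degrees -/
lemma bad1 {c n : ℕ} (h2 : 2 ≤ n) (hn : n ≤ c + 1) :
    ¬ reesRelStable (gen k (2 * c + 1)) n := by
  obtain ⟨v, rfl⟩ := Nat.exists_eq_add_of_le h2
  obtain ⟨d, rfl⟩ : ∃ d, c = v + 1 + d := ⟨c - v - 1, by omega⟩
  refine not_stable _ (2 + v) (2 * d + 1) 0 1 (v + 1) (by omega) (by omega) (by linarith) ?_ ?_
  · nlinarith
  · intro u' v' w' h h1 h2
    rw [show 2 + v - 1 = v + 1 by omega] at *
    have hu : u' ≤ 1 := by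
      by_contra hu
      have : 2 ≤ u' := by omega
      nlinarith
    have : u' = 0 ∨ u' = 1 := by omega
    rcases this with rfl | rfl
    · have : (2 * (v + 1 + d) + 1) * v' + (2 * (v + 1 + d) + 1) * w'
        = (2 * (v + 1 + d) + 1) * (v + 1) := by rw [← mul_add]; congr 1; omega
      have : v' = 0 := by linarith
      omega
    · omega

lemma bad2 {c : ℕ} (hc : 1 ≤ c) :
    ¬ reesRelStable (gen k (2 * c + 1)) (c + 2) := by
  refine not_stable _ (c + 2) 0 1 1 (c + 1) (by omega) (by omega) (by linarith) ?_ ?_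
  · nlinarith
  · intro u' v' w' h h1 h2
    rw [show c + 2 - 1 = c + 1 by omega] at *
    obtain rfl : u' = 0 := by
      by_contra hu
      have : 1 ≤ u' := by omega
      nlinarith
    have : (2 * c + 1) * v' + (2 * c + 1) * w'
      = (2 * c + 1) * (c + 1) := by rw [← mul_add]; congr 1; omega
    have : v' = 0 := by linarith
    omega

lemma bad3 {c : ℕ} :
    ¬ reesRelStable (gen k (2 * c + 1)) (2 * c + 3) := by
  refine not_stable _ (2 * c + 3) 0 0 2 (2 * c + 1) (by omega) (by omega) (by linarith) ?_ ?_
  · nlinarith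
  · intro u' v' w' h h1 h2
    rw [show 2 * c + 3 - 1 = 2 * c + 2 by omega] at *
    have hu : u' ≤ 1 := by
      by_contra hu
      have : 2 ≤ u' := by omega
      nlinarith
    have e : (2 * c + 1) * u' + (2 * c + 1) * v' + (2 * c + 1) * w'
      = (2 * c + 1) * (2 * c + 2) := by rw [← mul_add, ← mul_add]; congr 1
    have : u' = 0 ∨ u' = 1 := by omega
    rcases this with rfl | rfl
    · have : v' = 0 := by linarith
      omega
    · have : 2 * v' ≤ 2 * c + 1 := by linarith
      omega

lemma stable_iff {c n : ℕ} (hc : 1 ≤ c) (h2 : 2 ≤ n) :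
    ¬ reesRelStable (gen k (2 * c + 1)) n ↔ n ≤ c + 2 ∨ n = 2 * c + 3 := by
  constructor
  · intro h
    by_contra h'
    push Not at h'
    exact h (stable (by omega) (good (by omega) h'.2))
  · rintro (h | rfl)
    · rcases Nat.lt_or_ge n (c + 2) with h' | h'
      · exact bad1 h2 (by omega)
      · obtain rfl : n = c + 2 := by omega
        exact bad2 hc
    · exact bad3

end Sift

/-- For `A = k[a₁,a₂]`, `p ≥ 5` odd, and `I = (a₁^p, a₂^p, a₁²a₂^{p-2})`:
`SD(I) = {1,2,…,(p-1)/2} ∪ {(p+1)/2, p}`; hence `st(I) = (p+3)/2` and `rt(I) = p`. -/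
theorem stmt_13 {k : Type*} [Field k] (p : ℕ) (hp : 5 ≤ p) (hodd : Odd p) :
    let a₁ : MvPolynomial (Fin 2) k := MvPolynomial.X 0
    let a₂ : MvPolynomial (Fin 2) k := MvPolynomial.X 1
    let x : Fin 3 → MvPolynomial (Fin 2) k := ![a₁ ^ p, a₂ ^ p, a₁ ^ 2 * a₂ ^ (p - 2)]
    siftedDegrees x = Set.Icc 1 ((p - 1) / 2) ∪ {(p + 1) / 2, p} ∧
    siftedType x = (p + 3) / 2 ∧ relType x = p := by
  intro a₁ a₂ x
  obtain ⟨m, rfl⟩ := hodd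
  obtain ⟨c, rfl⟩ : ∃ c, m = c + 1 := ⟨m - 1, by omega⟩
  have hx : x = Sift.gen k (2 * c + 1) := by
    simp only [x, a₁, a₂, Sift.gen]
    rw [show 2 * (c + 1) + 1 = 2 * c + 1 + 2 by ring, Nat.add_sub_cancel]
  have hc : 1 ≤ c := by omega
  have hS : siftedDegrees x = Set.Icc 1 (c + 1) ∪ {c + 2, 2 * c + 3} := by
    rw [hx]
    ext n
    simp only [siftedDegrees, Set.mem_union, Set.mem_singleton_iff, Set.mem_setOf_eq,
      Set.mem_Icc, Set.mem_insert_iff]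
    constructor
    · rintro (rfl | ⟨h1, h2⟩)
      · omega
      · rw [Sift.stable_iff hc h1] at h2
        omega
    · intro h
      by_cases h1 : n = 1
      · exact Or.inl h1
      · have h2 : 2 ≤ n := by omega
        exact Or.inr ⟨h2, (Sift.stable_iff hc h2).2 (by omega)⟩
  refine ⟨?_, ?_, ?_⟩
  · rw [hS, show (2 * (c + 1) + 1 - 1) / 2 = c + 1 by omega,
      show (2 * (c + 1) + 1 + 1) / 2 = c + 2 by omega, show 2 * (c + 1) + 1 = 2 * c + 3 by omega]
  · have : (Set.Icc 1 (c + 1) ∪ {c + 2, 2 * c + 3} : Set ℕ) =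
        ((insert (2 * c + 3) (Finset.Icc 1 (c + 2)) : Finset ℕ) : Set ℕ) := by
      ext n
      simp only [Set.mem_union, Set.mem_singleton_iff, Set.mem_Icc, Set.mem_insert_iff,
        Finset.coe_insert, Finset.coe_Icc]
      omega
    rw [siftedType, hS, this, Set.ncard_coe_finset, Finset.card_insert_of_notMem, Nat.card_Icc]
    · omega
    · rw [Finset.mem_Icc]; omega
  · rw [relType, hx]
    apply le_antisymm
    · apply Nat.sInf_le
      refine ⟨by omega, fun n hn => ?_⟩
      by_contra h
      rw [Sift.stable_iff hc (by omega)] at h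
      omega
    · apply le_csInf
      · refine ⟨2 * (c + 1) + 1, by omega, fun n hn => ?_⟩
        by_contra h
        rw [Sift.stable_iff hc (by omega)] at h
        omega
      · rintro s ⟨h1, h2⟩
        by_contra hlt
        exact (Sift.stable_iff (k := k) hc (n := 2 * c + 3) (by omega)).2 (Or.inr rfl)
          (h2 _ (by omega))
end

section
/- Let k be a field, A = k[a_1,a_2], and let p, u be positive integers with p ≥ 3, u < p/2, and gcd(u,p) = 1. Let I = (a_1^p, a_2^p, a_1^u a_2^{p-u}). Run Euclid's algorithm on r_0 = p and r_1 = u: r_{i-1} = q_i r_i + r_{i+1} with 0 ≤ r_{i+1} < r_i for 1 ≤ i ≤ n-1, and r_n = 0 (so r_{n-1} = gcd(u,p) = 1). Define δ_0 = 0, δ_1 = 1, and δ_{i+1} = q_i δ_i + δ_{i-1} for 1 ≤ i ≤ n-1. Then the set of sifted degrees of I is SD(I) = ⋃_{i=1}^{n-1} {δ_{i-1} + j·δ_i : 1 ≤ j ≤ q_i}, a union of finite arithmetic progressions whose largest element is δ_n = p; consequently st(I) = q_1 + q_2 + ⋯ + q_{n-1} and rt(I) = p. -/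
theorem aux_weight_one {τ : Type*} (m : τ →₀ ℕ) :
    Finsupp.weight (1 : τ → ℕ) m = m.degree :=
  (DFunLike.congr_fun (Finsupp.degree_eq_weight_one (R := ℕ) (σ := τ)) m).symm

open MvPolynomial in
theorem aux_mem_reesRel {A : Type*} [CommRing A] {r : ℕ} (x : Fin r → A) (n : ℕ)
    (f : MvPolynomial (Fin r) A) :
    f ∈ reesRel x n ↔ f.IsHomogeneous n ∧ MvPolynomial.eval x f = 0 := by
  unfold reesRel
  rw [Submodule.mem_inf, MvPolynomial.mem_homogeneousSubmodule, and_comm]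
  refine and_congr_right fun hf => ?_
  rw [Submodule.restrictScalars_mem, RingHom.mem_ker]
  have key : (MvPolynomial.aeval (fun i => Polynomial.C (x i) * Polynomial.X) :
      MvPolynomial (Fin r) A →ₐ[A] Polynomial A) f
      = Polynomial.C (MvPolynomial.eval x f) * Polynomial.X ^ n := by
    conv_lhs => rw [f.as_sum]
    conv_rhs => rw [f.as_sum]
    rw [map_sum, map_sum, map_sum, Finset.sum_mul]
    refine Finset.sum_congr rfl fun m hm => ?_
    have hd : m.degree = n := by
      have := hf (MvPolynomial.mem_support_iff.1 hm)
      rwa [aux_weight_one] at this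
    rw [MvPolynomial.aeval_monomial, MvPolynomial.eval_monomial, map_mul, mul_assoc]
    congr 1
    rw [← hd, Finsupp.degree_eq_sum, Finsupp.prod_fintype _ _ (by simp),
      Finsupp.prod_fintype _ _ (by simp), map_prod, ← Finset.prod_pow_eq_pow_sum,
      ← Finset.prod_mul_distrib]
    refine Finset.prod_congr rfl fun i _ => ?_
    rw [mul_pow, map_pow]
  rw [key]
  constructor
  · intro h
    have := congrArg (fun g => Polynomial.coeff g n) h
    simpa using this
  · intro h
    rw [h]; simp

/-- Monomials of the presentation ring. -/
noncomputable def auxMon (k : Type*) [Field k] (i j c d e : ℕ) :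
    MvPolynomial (Fin 3) (MvPolynomial (Fin 2) k) :=
  MvPolynomial.C (MvPolynomial.X 0 ^ i * MvPolynomial.X 1 ^ j) *
    (MvPolynomial.X 0 ^ c * MvPolynomial.X 1 ^ d * MvPolynomial.X 2 ^ e)

/-- The generators. -/
noncomputable def auxGen (k : Type*) [Field k] (p u v : ℕ) : Fin 3 → MvPolynomial (Fin 2) k :=
  ![MvPolynomial.X 0 ^ p, MvPolynomial.X 1 ^ p, MvPolynomial.X 0 ^ u * MvPolynomial.X 1 ^ v]

theorem aux_eval_mon (k : Type*) [Field k] (p u v i j c d e : ℕ) :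
    MvPolynomial.eval (auxGen k p u v) (auxMon k i j c d e) =
      MvPolynomial.X 0 ^ (i + p * c + u * e) * MvPolynomial.X 1 ^ (j + p * d + v * e) := by
  simp [auxMon, auxGen]
  ring

theorem aux_hom_mon (k : Type*) [Field k] (i j c d e s : ℕ) (h : c + d + e = s) :
    (auxMon k i j c d e).IsHomogeneous s := by
  subst h
  unfold auxMon
  have h0 := (((MvPolynomial.isHomogeneous_X (MvPolynomial (Fin 2) k) (0 : Fin 3)).pow c).mul
    ((MvPolynomial.isHomogeneous_X (MvPolynomial (Fin 2) k) (1 : Fin 3)).pow d)).mul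
    ((MvPolynomial.isHomogeneous_X (MvPolynomial (Fin 2) k) (2 : Fin 3)).pow e)
  have h1 := (MvPolynomial.isHomogeneous_C (Fin 3)
    (MvPolynomial.X 0 ^ i * MvPolynomial.X 1 ^ j : MvPolynomial (Fin 2) k)).mul h0
  convert h1 using 1
  ring

theorem aux_sub_mem (k : Type*) [Field k] (p u v s : ℕ) (i j c d e i' j' c' d' e' : ℕ)
    (h : c + d + e = s) (h' : c' + d' + e' = s)
    (h1 : i + p * c + u * e = i' + p * c' + u * e')
    (h2 : j + p * d + v * e = j' + p * d' + v * e') :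
    auxMon k i j c d e - auxMon k i' j' c' d' e' ∈ reesRel (auxGen k p u v) s := by
  rw [aux_mem_reesRel]
  refine ⟨(aux_hom_mon k _ _ _ _ _ _ h).sub (aux_hom_mon k _ _ _ _ _ _ h'), ?_⟩
  rw [map_sub, aux_eval_mon, aux_eval_mon, h1, h2, sub_self]

theorem aux_share (k : Type*) [Field k] (p u v s : ℕ) (i j c d e i' j' c' d' e' : ℕ)
    (h : c + d + e = s) (h' : c' + d' + e' = s)
    (h1 : i + p * c + u * e = i' + p * c' + u * e')
    (h2 : j + p * d + v * e = j' + p * d' + v * e')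
    (hs : (0 < c ∧ 0 < c') ∨ (0 < d ∧ 0 < d') ∨ (0 < e ∧ 0 < e')) :
    auxMon k i j c d e - auxMon k i' j' c' d' e' ∈
      MvPolynomial.homogeneousSubmodule (Fin 3) (MvPolynomial (Fin 2) k) 1 *
        reesRel (auxGen k p u v) (s - 1) := by
  have hX : ∀ l : Fin 3, (MvPolynomial.X l : MvPolynomial (Fin 3) (MvPolynomial (Fin 2) k)) ∈
      MvPolynomial.homogeneousSubmodule (Fin 3) (MvPolynomial (Fin 2) k) 1 := fun l =>
    (MvPolynomial.mem_homogeneousSubmodule _ _).2 (MvPolynomial.isHomogeneous_X _ l)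
  rcases hs with ⟨a, b⟩ | ⟨a, b⟩ | ⟨a, b⟩
  · obtain ⟨c, rfl⟩ := Nat.exists_eq_add_of_lt a
    obtain ⟨c', rfl⟩ := Nat.exists_eq_add_of_lt b
    have := Submodule.mul_mem_mul (hX 0) (aux_sub_mem k p u v (s - 1) i j c d e i' j' c' d' e'
      (by omega) (by omega) (by linarith) (by linarith))
    convert this using 1
    unfold auxMon; ring
  · obtain ⟨d, rfl⟩ := Nat.exists_eq_add_of_lt a
    obtain ⟨d', rfl⟩ := Nat.exists_eq_add_of_lt b
    have := Submodule.mul_mem_mul (hX 1) (aux_sub_mem k p u v (s - 1) i j c d e i' j' c' d' e'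
      (by omega) (by omega) (by linarith) (by linarith))
    convert this using 1
    unfold auxMon; ring
  · obtain ⟨e, rfl⟩ := Nat.exists_eq_add_of_lt a
    obtain ⟨e', rfl⟩ := Nat.exists_eq_add_of_lt b
    have := Submodule.mul_mem_mul (hX 2) (aux_sub_mem k p u v (s - 1) i j c d e i' j' c' d' e'
      (by omega) (by omega) (by linarith) (by linarith))
    convert this using 1
    unfold auxMon; ring

theorem aux_share2 (k : Type*) [Field k] (p u v s : ℕ) (i j c d e i' j' c' d' e' : ℕ)
    (h : c + d + e = s) (h' : c' + d' + e' = s)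
    (h1 : i + p * c + u * e = i' + p * c' + u * e')
    (h2 : j + p * d + v * e = j' + p * d' + v * e')
    (hs : ∃ i'' j'' c'' d'' e'', c'' + d'' + e'' = s ∧ 
      i'' + p * c'' + u * e'' = i' + p * c' + u * e' ∧
      j'' + p * d'' + v * e'' = j' + p * d' + v * e' ∧
      ((0 < c ∧ 0 < c'') ∨ (0 < d ∧ 0 < d'') ∨ (0 < e ∧ 0 < e'')) ∧
      ((0 < c'' ∧ 0 < c') ∨ (0 < d'' ∧ 0 < d') ∨ (0 < e'' ∧ 0 < e'))) :
    auxMon k i j c d e - auxMon k i' j' c' d' e' ∈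
      MvPolynomial.homogeneousSubmodule (Fin 3) (MvPolynomial (Fin 2) k) 1 *
        reesRel (auxGen k p u v) (s - 1) := by
  obtain ⟨i'', j'', c'', d'', e'', a1, a2, a3, a4, a5⟩ := hs
  have A := aux_share k p u v s i j c d e i'' j'' c'' d'' e'' h a1 (h1.trans a2.symm)
    (h2.trans a3.symm) a4
  have B := aux_share k p u v s i'' j'' c'' d'' e'' i' j' c' d' e' a1 h' a2 a3 a5
  have := Submodule.add_mem _ A B
  simpa using this

/-- Record condition. -/
def auxRec (p u s : ℕ) (σ : ℤ) : Prop :=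
  ∃ c : ℤ, 0 ≤ σ * (u * s - p * c) ∧ ∀ t c' : ℤ, 1 ≤ t → t < s →
    0 ≤ σ * (u * t - p * c') → σ * (u * s - p * c) < σ * (u * t - p * c')

theorem aux_nrec1 (p u v s : ℕ) (hu : 0 < u) (hv : 0 < v) (hp : u + v = p)
    (h : ¬ auxRec p u s (-1)) (c : ℕ) (hc : u * s ≤ p * c) :
    ∃ t c' : ℕ, 1 ≤ t ∧ t < s ∧ c' ≤ t ∧ u * t ≤ p * c' ∧ p * c' + u * s ≤ p * c + u * t := by
  unfold auxRec at h
  push Not at h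
  obtain ⟨t, c', h1, h2, h3, h4⟩ := h c (by zify at hc; linarith)
  lift t to ℕ using by omega
  have hc' : 0 ≤ c' := by
    by_contra hneg
    push Not at hneg
    have : (p : ℤ) * c' ≤ 0 := by nlinarith
    have : (0 : ℤ) < u * t := by
      have : (0 : ℤ) < u := by exact_mod_cast hu
      positivity
    linarith
  lift c' to ℕ using hc'
  by_cases hct : c' ≤ t
  · refine ⟨t, c', by omega, by omega, hct, ?_, ?_⟩
    · zify; linarith
    · zify; linarith
  · refine ⟨t, t, by omega, by omega, le_rfl, ?_, ?_⟩
    · exact Nat.mul_le_mul_right _ (by omega)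
    · have : p * t ≤ p * c' := Nat.mul_le_mul_left _ (by omega)
      zify at *; linarith

theorem aux_nrec2 (p u v s : ℕ) (hu : 0 < u) (hv : 0 < v) (hp : u + v = p)
    (h : ¬ auxRec p u s 1) (c : ℕ) (hc : p * c ≤ u * s) :
    ∃ t c' : ℕ, 1 ≤ t ∧ t < s ∧ c' ≤ t ∧ p * c' ≤ u * t ∧ u * t + p * c ≤ u * s + p * c' := by
  unfold auxRec at h
  push Not at h
  obtain ⟨t, c', h1, h2, h3, h4⟩ := h c (by zify at hc; linarith)
  lift t to ℕ using by omega
  by_cases hct : 0 ≤ c'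
  · lift c' to ℕ using hct
    refine ⟨t, c', by omega, by omega, ?_, ?_, ?_⟩
    · by_contra hlt
      push Not at hlt
      have : u * c' < p * c' := Nat.mul_lt_mul_of_pos_right (by omega) (by omega)
      have : u * t ≤ u * c' := Nat.mul_le_mul_left _ (by omega)
      zify at *; linarith
    · zify; linarith
    · zify; linarith
  · refine ⟨t, 0, by omega, by omega, by omega, by simp, ?_⟩
    push Not at hct
    have : (p : ℤ) * c' ≤ 0 := by nlinarith
    zify; linarith

theorem aux_caseY (k : Type*) [Field k] (p u v s : ℕ) (hu : 0 < u) (hv : 0 < v) (hp : u + v = p)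
    (hs2 : 2 ≤ s) (hr1 : ¬ auxRec p u s (-1)) (hr2 : ¬ auxRec p u s 1)
    (i j i' j' c' d' : ℕ)
    (h' : c' + d' = s)
    (h1 : i + u * s = i' + p * c')
    (h2 : j + v * s = j' + p * d') :
    auxMon k i j 0 0 s - auxMon k i' j' c' d' 0 ∈
      MvPolynomial.homogeneousSubmodule (Fin 3) (MvPolynomial (Fin 2) k) 1 *
        reesRel (auxGen k p u v) (s - 1) := by
  apply aux_share2 _ _ _ _ _ _ _ _ _ _ _ _ _ _ _ (by omega) (by omega) (by simpa using h1)
    (by simpa using h2)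
  rcases le_total (u * s) (p * c') with hle | hle
  · obtain ⟨t, c, t1, t2, t3, t4, t5⟩ := aux_nrec1 p u v s hu hv hp hr1 c' hle
    refine ⟨i + u * t - p * c, j + (p * c - u * t), c, t - c, s - t, by omega, ?_, ?_, ?_, ?_⟩
    · have e1 : u * s = u * t + u * (s - t) := by rw [← mul_add]; congr 1; omega
      simp only [mul_zero, add_zero]
      omega
    · have e1 : v * s = v * t + v * (s - t) := by rw [← mul_add]; congr 1; omega
      have e2 : p * t = u * t + v * t := by rw [← add_mul, hp]
      have e3 : p * t = p * c + p * (t - c) := by rw [← mul_add]; congr 1; omega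
      simp only [mul_zero, add_zero]
      omega
    · right; right; omega
    · left
      have : 0 < u * t := by positivity
      have : 0 < u * s := by positivity
      constructor
      · rcases Nat.eq_zero_or_pos c with h | h
        · subst h; omega
        · exact h
      · rcases Nat.eq_zero_or_pos c' with h | h
        · subst h; omega
        · exact h
  · obtain ⟨t, c, t1, t2, t3, t4, t5⟩ := aux_nrec2 p u v s hu hv hp hr2 c' hle
    have f0 : p * s = u * s + v * s := by rw [← add_mul, hp]
    have f1 : p * s = p * c' + p * d' := by rw [← mul_add]; congr 1; omega
    have e1 : u * s = u * t + u * (s - t) := by rw [← mul_add]; congr 1; omega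
    have e1' : v * s = v * t + v * (s - t) := by rw [← mul_add]; congr 1; omega
    have e2 : p * t = u * t + v * t := by rw [← add_mul, hp]
    have e3 : p * t = p * c + p * (t - c) := by rw [← mul_add]; congr 1; omega
    refine ⟨i + u * t - p * c, j + p * c - u * t, c, t - c, s - t, by omega, ?_, ?_, ?_, ?_⟩
    · simp only [mul_zero, add_zero]
      omega
    · simp only [mul_zero, add_zero]
      omega
    · right; right; omega
    · right; left
      have : 0 < v * t := by positivity
      have : 0 < v * s := by positivity
      constructor
      · rcases Nat.eq_zero_or_pos (t - c) with h | h
        · rw [h] at e3; omega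
        · exact h
      · rcases Nat.eq_zero_or_pos d' with h | h
        · subst h; omega
        · exact h

theorem aux_pair0 (k : Type*) [Field k] (p u v s : ℕ) (hu : 0 < u) (hv : 0 < v) (hp : u + v = p)
    (hs2 : 2 ≤ s) (hr1 : ¬ auxRec p u s (-1)) (hr2 : ¬ auxRec p u s 1)
    (i j c d e i' j' c' d' : ℕ)
    (h : c + d + e = s) (h' : c' + d' = s)
    (h1 : i + p * c + u * e = i' + p * c')
    (h2 : j + p * d + v * e = j' + p * d') :
    auxMon k i j c d e - auxMon k i' j' c' d' 0 ∈
      MvPolynomial.homogeneousSubmodule (Fin 3) (MvPolynomial (Fin 2) k) 1 *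
        reesRel (auxGen k p u v) (s - 1) := by
  by_cases hsh : (0 < c ∧ 0 < c') ∨ (0 < d ∧ 0 < d')
  · exact aux_share k p u v s _ _ _ _ _ _ _ _ _ _ h (by omega) (by simpa using h1)
      (by simpa using h2) (by tauto)
  by_cases hY : e = s
  · obtain rfl : c = 0 := by omega
    obtain rfl : d = 0 := by omega
    subst hY
    exact aux_caseY k p u v _ hu hv hp hs2 hr1 hr2 i j i' j' c' d' h' (by simpa using h1)
      (by simpa using h2)
  apply aux_share2 _ _ _ _ _ _ _ _ _ _ _ _ _ _ _ h (by omega) (by simpa using h1)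
    (by simpa using h2)
  simp only [mul_zero, add_zero]
  have k1 : u * e ≤ p * e := Nat.mul_le_mul_right _ (by omega)
  have k2 : v * e ≤ p * e := Nat.mul_le_mul_right _ (by omega)
  by_cases hc : 0 < c
  · obtain rfl : c' = 0 := by omega
    obtain rfl : d = 0 := by omega
    obtain rfl : d' = s := by omega
    obtain ⟨c, rfl⟩ := Nat.exists_eq_add_of_lt hc
    have hps : p * d' = p * e + p * c + p := by rw [← h]; ring
    refine ⟨i + p, j - p, c, 1, e, by omega, ?_, ?_, ?_, ?_⟩
    · rw [← h1]; ring
    · simp only [mul_one, mul_zero] at *; omega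
    · omega
    · omega
  · obtain rfl : c = 0 := by omega
    obtain rfl : d' = 0 := by omega
    obtain rfl : c' = s := by omega
    obtain ⟨d, rfl⟩ := Nat.exists_eq_add_of_lt (show 0 < d by omega)
    have hps : p * c' = p * e + p * d + p := by rw [← h]; ring
    refine ⟨i - p, j + p, 1, d, e, by omega, ?_, ?_, ?_, ?_⟩
    · simp only [mul_one, mul_zero] at *; omega
    · rw [← h2]; ring
    · omega
    · omega

theorem aux_pair (k : Type*) [Field k] (p u v s : ℕ) (hu : 0 < u) (hv : 0 < v) (hp : u + v = p)
    (hs2 : 2 ≤ s) (hr1 : ¬ auxRec p u s (-1)) (hr2 : ¬ auxRec p u s 1)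
    (i j c d e i' j' c' d' e' : ℕ)
    (h : c + d + e = s) (h' : c' + d' + e' = s)
    (h1 : i + p * c + u * e = i' + p * c' + u * e')
    (h2 : j + p * d + v * e = j' + p * d' + v * e') :
    auxMon k i j c d e - auxMon k i' j' c' d' e' ∈
      MvPolynomial.homogeneousSubmodule (Fin 3) (MvPolynomial (Fin 2) k) 1 *
        reesRel (auxGen k p u v) (s - 1) := by
  by_cases he' : e' = 0
  · subst he'
    exact aux_pair0 k p u v s hu hv hp hs2 hr1 hr2 _ _ _ _ _ _ _ _ _ h (by simpa using h')
      (by simpa using h1) (by simpa using h2)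
  by_cases he : e = 0
  · subst he
    rw [← Submodule.neg_mem_iff, neg_sub]
    exact aux_pair0 k p u v s hu hv hp hs2 hr1 hr2 _ _ _ _ _ _ _ _ _ h' (by simpa using h)
      (by simpa using h1.symm) (by simpa using h2.symm)
  exact aux_share k p u v s _ _ _ _ _ _ _ _ _ _ h h' h1 h2 (by omega)

theorem aux_mon_eq (k : Type*) [Field k] (m : Fin 3 →₀ ℕ) (b : Fin 2 →₀ ℕ) :
    MvPolynomial.monomial m (MvPolynomial.monomial b (1 : k)) =
      auxMon k (b 0) (b 1) (m 0) (m 1) (m 2) := by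
  rw [MvPolynomial.monomial_eq, MvPolynomial.monomial_eq, Finsupp.prod_fintype _ _ (by simp),
      Finsupp.prod_fintype _ _ (by simp), Fin.prod_univ_two, Fin.prod_univ_three]
  simp [auxMon]

theorem aux_eval_monomial (k : Type*) [Field k] (p u v : ℕ) (m : Fin 3 →₀ ℕ) (b : Fin 2 →₀ ℕ) :
    MvPolynomial.eval (auxGen k p u v)
      (MvPolynomial.monomial m (MvPolynomial.monomial b (1 : k))) =
    MvPolynomial.monomial (Finsupp.single 0 (b 0 + p * m 0 + u * m 2) +
      Finsupp.single 1 (b 1 + p * m 1 + v * m 2)) 1 := by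
  rw [aux_mon_eq, aux_eval_mon, MvPolynomial.monomial_eq, Finsupp.prod_fintype _ _ (by simp),
    Fin.prod_univ_two]
  simp

theorem aux_single_inj {a b a' b' : ℕ} (h : (Finsupp.single 0 a + Finsupp.single 1 b : Fin 2 →₀ ℕ) =
    Finsupp.single 0 a' + Finsupp.single 1 b') : a = a' ∧ b = b' := by
  have h0 := DFunLike.congr_fun h 0
  have h1 := DFunLike.congr_fun h 1
  simp at h0 h1
  exact ⟨h0, h1⟩

theorem aux_stable (k : Type*) [Field k] (p u v s : ℕ) (hu : 0 < u) (hv : 0 < v) (hp : u + v = p)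
    (hs2 : 2 ≤ s) (hr1 : ¬ auxRec p u s (-1)) (hr2 : ¬ auxRec p u s 1) :
    reesRelStable (auxGen k p u v) s := by
  classical
  unfold reesRelStable
  apply le_antisymm
  · intro f hf
    set M := MvPolynomial.homogeneousSubmodule (Fin 3) (MvPolynomial (Fin 2) k) 1 *
        reesRel (auxGen k p u v) (s - 1) with hM
    rw [aux_mem_reesRel] at hf
    obtain ⟨hf, h0⟩ := hf
    let w : (Fin 3 →₀ ℕ) × (Fin 2 →₀ ℕ) → (Fin 2 →₀ ℕ) := fun mb =>
      (Finsupp.single 0 (mb.2 0 + p * mb.1 0 + u * mb.1 2) +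
        Finsupp.single 1 (mb.2 1 + p * mb.1 1 + v * mb.1 2))
    let S : (Fin 2 →₀ ℕ) → MvPolynomial (Fin 3) (MvPolynomial (Fin 2) k) := fun N =>
      if hN : ∃ mb : (Fin 3 →₀ ℕ) × (Fin 2 →₀ ℕ), mb.1.degree = s ∧ w mb = N then
        MvPolynomial.monomial hN.choose.1 (MvPolynomial.monomial hN.choose.2 (1 : k)) else 0
    let T : MvPolynomial (Fin 2) k →ₗ[k] MvPolynomial (Fin 3) (MvPolynomial (Fin 2) k) :=
      (MvPolynomial.basisMonomials (Fin 2) k).constr k S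
    have hT : ∀ N, T (MvPolynomial.monomial N 1) = S N := by
      intro N
      have := (MvPolynomial.basisMonomials (Fin 2) k).constr_basis k S N
      simpa [MvPolynomial.coe_basisMonomials] using this
    have key : ∀ m : Fin 3 →₀ ℕ, m.degree = s → ∀ a : MvPolynomial (Fin 2) k,
        MvPolynomial.monomial m a - T (MvPolynomial.eval (auxGen k p u v)
          (MvPolynomial.monomial m a)) ∈ M := by
      intro m hm a
      induction a using MvPolynomial.induction_on' with
      | monomial b c =>
        have e1 : MvPolynomial.monomial b c = c • (MvPolynomial.monomial b (1 : k)) := by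
          rw [MvPolynomial.smul_monomial]; simp
        have e2 : (MvPolynomial.monomial m (c • (MvPolynomial.monomial b (1 : k)))) =
            (MvPolynomial.C c : MvPolynomial (Fin 2) k) •
              MvPolynomial.monomial m (MvPolynomial.monomial b (1 : k)) := by
          rw [MvPolynomial.smul_monomial (σ := Fin 3), smul_eq_mul, MvPolynomial.smul_eq_C_mul]
        rw [e1, e2, MvPolynomial.smul_eval, aux_eval_monomial, ← MvPolynomial.smul_eq_C_mul,
          map_smul, hT]
        have e3 : ∀ z : MvPolynomial (Fin 3) (MvPolynomial (Fin 2) k),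
            c • z = (MvPolynomial.C c : MvPolynomial (Fin 2) k) • z := by
          intro z
          rw [← MvPolynomial.algebraMap_eq, algebraMap_smul]
        rw [e3, ← smul_sub]
        apply Submodule.smul_mem
        have hN : ∃ mb : (Fin 3 →₀ ℕ) × (Fin 2 →₀ ℕ), mb.1.degree = s ∧ w mb = w (m, b) :=
          ⟨(m, b), hm, rfl⟩
        have e4 : S (w (m, b)) = MvPolynomial.monomial hN.choose.1
            (MvPolynomial.monomial hN.choose.2 (1 : k)) := dif_pos hN
        change _ - S (w (m, b)) ∈ M
        rw [e4]
        obtain ⟨g1, g2⟩ := hN.choose_spec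
        obtain ⟨g3, g4⟩ := aux_single_inj g2
        rw [aux_mon_eq, aux_mon_eq]
        rw [Finsupp.degree_eq_sum, Fin.sum_univ_three] at g1 hm
        exact aux_pair k p u v s hu hv hp hs2 hr1 hr2 _ _ _ _ _ _ _ _ _ _ hm g1 g3.symm g4.symm
      | add a a' h h' =>
        have := Submodule.add_mem _ h h'
        rw [map_add, map_add, map_add]
        convert this using 1
        ring
    have hsum : f - T (MvPolynomial.eval (auxGen k p u v) f) ∈ M := by
      have e : f - T (MvPolynomial.eval (auxGen k p u v) f) = ∑ m ∈ f.support,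
          (MvPolynomial.monomial m (f.coeff m) - T (MvPolynomial.eval (auxGen k p u v)
            (MvPolynomial.monomial m (f.coeff m)))) := by
        rw [Finset.sum_sub_distrib, ← map_sum, ← map_sum, ← f.as_sum]
      rw [e]
      refine Submodule.sum_mem _ fun m hm => key m ?_ _
      have := hf (MvPolynomial.mem_support_iff.1 hm)
      rwa [aux_weight_one] at this
    rw [h0, map_zero, sub_zero] at hsum
    exact hsum
  · rw [Submodule.mul_le]
    intro l hl g hg
    rw [aux_mem_reesRel] at hg ⊢
    refine ⟨?_, by rw [map_mul, hg.2, mul_zero]⟩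
    have := ((MvPolynomial.mem_homogeneousSubmodule _ _).1 hl).mul hg.1
    rwa [show 1 + (s - 1) = s by omega] at this

theorem aux_coeff (k : Type*) [Field k] (p u v s : ℕ) (hp : u + v = p)
    (g : MvPolynomial (Fin 3) (MvPolynomial (Fin 2) k)) (hg : g ∈ reesRel (auxGen k p u v) s)
    (b : Fin 2 →₀ ℕ)
    (hb : MvPolynomial.coeff b (MvPolynomial.coeff (Finsupp.single 2 s) g) ≠ 0) :
    ∃ t c : ℕ, 1 ≤ t ∧ t ≤ s ∧ p * c ≤ u * t + b 0 ∧ u * t ≤ p * c + b 1 := by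
  classical
  rw [aux_mem_reesRel] at hg
  obtain ⟨hf, h0⟩ := hg
  rw [MvPolynomial.eval_eq] at h0
  let w : (Fin 3 →₀ ℕ) → (Fin 2 →₀ ℕ) := fun m =>
      (Finsupp.single 0 (p * m 0 + u * m 2) +
        Finsupp.single 1 (p * m 1 + v * m 2))
  have hw : ∀ m : Fin 3 →₀ ℕ, ∏ i ∈ m.support, (auxGen k p u v i) ^ (m i) =
      MvPolynomial.monomial (w m) 1 := by
    intro m
    have := aux_eval_monomial k p u v m 0
    rw [MvPolynomial.eval_monomial] at this
    simp only [Finsupp.coe_zero, Pi.zero_apply, zero_add, Finsupp.prod] at this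
    rw [← this]
    simp
  simp only [hw] at h0
  have h1 := congrArg (MvPolynomial.coeff (b + w (Finsupp.single 2 s))) h0
  rw [MvPolynomial.coeff_sum, MvPolynomial.coeff_zero] at h1
  have hmem : Finsupp.single 2 s ∈ g.support := by
    rw [MvPolynomial.mem_support_iff]
    intro h; rw [h] at hb; simp at hb
  rw [← Finset.add_sum_erase _ _ hmem, MvPolynomial.coeff_mul_monomial, mul_one] at h1
  have h2 : ∑ m ∈ g.support.erase (Finsupp.single 2 s),
      MvPolynomial.coeff (b + w (Finsupp.single 2 s)) (MvPolynomial.coeff m g *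
        MvPolynomial.monomial (w m) 1) ≠ 0 := by
    intro h; rw [h, add_zero] at h1; exact hb h1
  obtain ⟨m, hm, hm'⟩ := Finset.exists_ne_zero_of_sum_ne_zero h2
  rw [MvPolynomial.coeff_mul_monomial'] at hm'
  have hle : w m ≤ b + w (Finsupp.single 2 s) := by
    by_contra h; rw [if_neg h] at hm'; exact hm' rfl
  have a0 := hle 0
  have a1 := hle 1
  simp [w] at a0 a1
  rw [Finset.mem_erase] at hm
  have hd := hf (MvPolynomial.mem_support_iff.1 hm.2)
  rw [aux_weight_one, Finsupp.degree_eq_sum, Fin.sum_univ_three] at hd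
  have hne : m 2 ≠ s := by
    intro h
    apply hm.1
    ext l
    fin_cases l <;> simp <;> omega
  have e1 : u * s = u * (m 0 + m 1) + u * m 2 := by rw [← mul_add, hd]
  have e2 : v * s = v * (m 0 + m 1) + v * m 2 := by rw [← mul_add, hd]
  have e3 : p * m 0 + p * m 1 = u * (m 0 + m 1) + v * (m 0 + m 1) := by rw [← hp]; ring
  exact ⟨m 0 + m 1, m 0, by omega, by omega, by omega, by omega⟩

theorem aux_coeff_mul (k : Type*) [Field k] (p u v s : ℕ) (hs : 1 ≤ s) (hp : u + v = p)
    (f : MvPolynomial (Fin 3) (MvPolynomial (Fin 2) k))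
    (hf : f ∈ MvPolynomial.homogeneousSubmodule (Fin 3) (MvPolynomial (Fin 2) k) 1 *
      reesRel (auxGen k p u v) (s - 1)) :
    ∀ b : Fin 2 →₀ ℕ,
    MvPolynomial.coeff b (MvPolynomial.coeff (Finsupp.single 2 s) f) ≠ 0 →
    ∃ t c : ℕ, 1 ≤ t ∧ t < s ∧ p * c ≤ u * t + b 0 ∧ u * t ≤ p * c + b 1 := by
  classical
  induction hf using Submodule.mul_induction_on' with
  | mem_mul_mem l hl g hg =>
    intro b hb
    rw [MvPolynomial.coeff_mul, MvPolynomial.coeff_sum] at hb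
    obtain ⟨⟨m1, m2⟩, hm, hne⟩ := Finset.exists_ne_zero_of_sum_ne_zero hb
    rw [Finset.HasAntidiagonal.mem_antidiagonal] at hm
    simp only at hm hne
    have hl0 : MvPolynomial.coeff m1 l ≠ 0 := by intro h; simp [h] at hne
    have hg0 : MvPolynomial.coeff m2 g ≠ 0 := by intro h; simp [h] at hne
    have d1 := ((MvPolynomial.mem_homogeneousSubmodule _ _).1 hl) hl0
    have d2 := ((aux_mem_reesRel _ _ _).1 hg).1 hg0
    rw [aux_weight_one, Finsupp.degree_eq_sum, Fin.sum_univ_three] at d1 d2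
    have s0 := DFunLike.congr_fun hm 0
    have s1 := DFunLike.congr_fun hm 1
    have s2 := DFunLike.congr_fun hm 2
    simp at s0 s1 s2
    have hm2 : m2 = Finsupp.single 2 (s - 1) := by
      ext l
      fin_cases l <;> simp <;> omega
    rw [MvPolynomial.coeff_mul] at hne
    obtain ⟨⟨b1, b2⟩, hbb, hne2⟩ := Finset.exists_ne_zero_of_sum_ne_zero hne
    rw [Finset.HasAntidiagonal.mem_antidiagonal] at hbb
    simp only at hbb hne2
    have := right_ne_zero_of_mul hne2
    rw [hm2] at this
    obtain ⟨t, c, t1, t2, t3, t4⟩ := aux_coeff k p u v (s - 1) hp g hg b2 this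
    have z0 := DFunLike.congr_fun hbb 0
    have z1 := DFunLike.congr_fun hbb 1
    simp at z0 z1
    exact ⟨t, c, t1, by omega, by omega, by omega⟩
  | add f _ g _ h h' =>
    intro b hb
    rw [MvPolynomial.coeff_add, MvPolynomial.coeff_add] at hb
    by_cases hz : MvPolynomial.coeff b (MvPolynomial.coeff (Finsupp.single 2 s) f) = 0
    · rw [hz, zero_add] at hb; exact h' b hb
    · exact h b hz

theorem aux_coeff_binom (k : Type*) [Field k] (i j i' j' c d s : ℕ) (hs : 1 ≤ s)
    (hcd : c + d = s) (b : Fin 2 →₀ ℕ) (hb : b = Finsupp.single 0 i + Finsupp.single 1 j) :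
    MvPolynomial.coeff b (MvPolynomial.coeff (Finsupp.single 2 s)
      (auxMon k i j 0 0 s - auxMon k i' j' c d 0)) ≠ 0 := by
  classical
  have h1 := aux_mon_eq k (Finsupp.single 2 s) b
  have h2 := aux_mon_eq k (Finsupp.single 0 c + Finsupp.single 1 d)
    (Finsupp.single 0 i' + Finsupp.single 1 j')
  simp [hb] at h1 h2
  rw [← h1, ← h2, MvPolynomial.coeff_sub, MvPolynomial.coeff_monomial, MvPolynomial.coeff_monomial,
    if_pos rfl, if_neg, sub_zero, hb, MvPolynomial.coeff_monomial, if_pos rfl]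
  · exact one_ne_zero
  · intro h
    have := DFunLike.congr_fun h 2
    simp at this
    omega

theorem aux_not_stable (k : Type*) [Field k] (p u v s : ℕ) (hu : 0 < u) (hv : 0 < v)
    (hp : u + v = p) (hs2 : 2 ≤ s) (hr : auxRec p u s (-1) ∨ auxRec p u s 1) :
    ¬ reesRelStable (auxGen k p u v) s := by
  intro hst
  unfold reesRelStable at hst
  have hp' : (p : ℤ) = u + v := by exact_mod_cast hp.symm
  have hpu : (u : ℤ) < p := by omega
  have hu' : (0 : ℤ) < u := by omega
  have hs' : (2 : ℤ) ≤ s := by omega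
  rcases hr with ⟨c, h1, h2⟩ | ⟨c, h1, h2⟩
  · have h3 := h2 1 1 le_rfl (by omega) (by linarith)
    have c0 : 0 ≤ c := by
      by_contra h; push Not at h; nlinarith
    have c1 : c ≤ s := by
      by_contra h; push Not at h; nlinarith
    lift c to ℕ using c0
    have hle : u * s ≤ p * c := by zify; linarith
    obtain ⟨d, hd⟩ := Nat.exists_eq_add_of_le (show c ≤ s by omega)
    obtain ⟨w, hw⟩ := Nat.exists_eq_add_of_le hle
    have hmem := aux_sub_mem k p u v s w 0 0 0 s 0 w c d 0 (by omega) (by omega)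
      (by simp; omega) (by
        have : p * s = u * s + v * s := by rw [← add_mul, hp]
        have : p * s = p * c + p * d := by rw [← mul_add, hd]
        simp; omega)
    rw [hst] at hmem
    obtain ⟨t, c', t1, t2, t3, t4⟩ := aux_coeff_mul k p u v s (by omega) hp _ hmem _
      (aux_coeff_binom k w 0 0 w c d s (by omega) hd.symm _ rfl)
    simp at t3 t4
    have := h2 t c' (by omega) (by omega) (by zify at t4; linarith)
    zify at t3 hw; linarith
  · have h3 := h2 1 0 le_rfl (by omega) (by linarith)
    have c0 : 0 ≤ c := by
      by_contra h; push Not at h; nlinarith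
    have c1 : c ≤ s := by
      by_contra h; push Not at h; nlinarith
    lift c to ℕ using c0
    have hle : p * c ≤ u * s := by zify; linarith
    obtain ⟨d, hd⟩ := Nat.exists_eq_add_of_le (show c ≤ s by omega)
    obtain ⟨w, hw⟩ := Nat.exists_eq_add_of_le hle
    have hmem := aux_sub_mem k p u v s 0 w 0 0 s w 0 c d 0 (by omega) (by omega)
      (by simp; omega) (by
        have : p * s = u * s + v * s := by rw [← add_mul, hp]
        have : p * s = p * c + p * d := by rw [← mul_add, hd]
        simp; omega)
    rw [hst] at hmem
    obtain ⟨t, c', t1, t2, t3, t4⟩ := aux_coeff_mul k p u v s (by omega) hp _ hmem _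
      (aux_coeff_binom k 0 w w 0 c d s (by omega) hd.symm _ rfl)
    simp at t3 t4
    have := h2 t c' (by omega) (by omega) (by zify at t3; linarith)
    zify at t4 hw; linarith

theorem aux_rec_of_basis (p u : ℕ) (σ : ℤ) (α γ β η a b : ℤ)
    (hα : σ * (u * α - p * γ) = a) (hβ : σ * (u * β - p * η) = -b)
    (hdet : γ * β - η * α = 1 ∨ γ * β - η * α = -1)
    (hα0 : 0 ≤ α) (hβ0 : 1 ≤ β) (hb : 0 < b) (hab : b ≤ a) (s : ℕ) (hs : (s : ℤ) = α + β) :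
    auxRec p u s σ := by
  have hv : σ * (u * s - p * (γ + η)) = a - b := by
    rw [hs]; linear_combination hα + hβ
  refine ⟨γ + η, by rw [hv]; linarith, ?_⟩
  intro t c ht1 ht2 ht3
  rw [hv]
  by_contra hcon
  push Not at hcon
  obtain ⟨x, y, h1, h2⟩ : ∃ x y : ℤ, t = x * α + y * β ∧ c = x * γ + y * η := by
    rcases hdet with h | h
    · exact ⟨c * β - t * η, t * γ - c * α, by linear_combination (-t) * h,
        by linear_combination (-c) * h⟩
    · exact ⟨-(c * β - t * η), -(t * γ - c * α), by linear_combination (t) * h,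
        by linear_combination (c) * h⟩
  have h3 : σ * (u * t - p * c) = x * a - y * b := by
    rw [h1, h2]; linear_combination x * hα + y * hβ
  rw [h3] at hcon ht3
  by_cases hx : x ≤ 0
  · have : y ≤ 0 := by
      by_contra hy; push Not at hy; nlinarith
    nlinarith
  · push Not at hx
    have : 1 ≤ y := by
      by_contra hy; push Not at hy; nlinarith
    nlinarith

theorem aux_not_rec_of_basis (p u : ℕ) (σ : ℤ) (α γ β η a b : ℤ)
    (hα : σ * (u * α - p * γ) = a) (hβ : σ * (u * β - p * η) = -b)
    (hdet : γ * β - η * α = 1 ∨ γ * β - η * α = -1)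
    (hα0 : 1 ≤ α) (hβ0 : 1 ≤ β) (hb : 0 < b) (ha : 0 < a) (s : ℕ) (hs : (s : ℤ) < α + β)
    (hs1 : α < s) :
    ¬ auxRec p u s σ := by
  rintro ⟨c, h0, hr⟩
  have := hr α γ hα0 hs1 (by rw [hα]; exact ha.le)
  rw [hα] at this
  obtain ⟨x, y, h1, h2⟩ : ∃ x y : ℤ, (s : ℤ) = x * α + y * β ∧ c = x * γ + y * η := by
    rcases hdet with h | h
    · exact ⟨c * β - s * η, s * γ - c * α, by linear_combination (-s : ℤ) * h,
        by linear_combination (-c) * h⟩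
    · exact ⟨-(c * β - s * η), -(s * γ - c * α), by linear_combination (s : ℤ) * h,
        by linear_combination (c) * h⟩
  have h3 : σ * (u * s - p * c) = x * a - y * b := by
    rw [h1, h2]; linear_combination x * hα + y * hβ
  rw [h3] at h0 this
  by_cases hx : x ≤ 0
  · have : y ≤ 0 := by
      by_contra hy; push Not at hy; nlinarith
    nlinarith
  · push Not at hx
    have : 1 ≤ y := by
      by_contra hy; push Not at hy; nlinarith
    nlinarith

theorem aux_comb (p u : ℕ) (hp : 3 ≤ p) (hu : 0 < u)
    (hup : 2 * u < p) (hgcd : Nat.gcd u p = 1)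
    (n : ℕ) (hn : 2 ≤ n) (r q : ℕ → ℕ) (hr0 : r 0 = p) (hr1 : r 1 = u)
    (hdiv : ∀ i, 1 ≤ i → i ≤ n - 1 → r (i - 1) = q i * r i + r (i + 1))
    (hlt : ∀ i, 1 ≤ i → i ≤ n - 1 → r (i + 1) < r i)
    (hrn : r n = 0)
    (δ : ℕ → ℕ) (hδ0 : δ 0 = 0) (hδ1 : δ 1 = 1)
    (hδ : ∀ i, 1 ≤ i → i ≤ n - 1 → δ (i + 1) = q i * δ i + δ (i - 1)) :
    (∀ i, 1 ≤ i → i ≤ n - 1 → 1 ≤ q i) ∧ (∀ i, 1 ≤ i → i ≤ n → 1 ≤ δ i) ∧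
    (∀ i, 1 ≤ i → i ≤ n - 1 → δ i ≤ δ (i + 1)) ∧ δ n = p ∧
    ∀ s, 1 ≤ s → ((auxRec p u s (-1) ∨ auxRec p u s 1) ↔
      ∃ i, 1 ≤ i ∧ i ≤ n - 1 ∧ ∃ j, 1 ≤ j ∧ j ≤ q i ∧ δ (i - 1) + j * δ i = s) := by
  have hq : ∀ i, 1 ≤ i → i ≤ n - 1 → 1 ≤ q i := by
    intro i h1 h2
    by_contra h
    have h0 : q i = 0 := by omega
    have a := hdiv i h1 h2
    have b := hlt i h1 h2
    rw [h0] at a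
    rcases Nat.lt_or_ge 1 i with h | h
    · have c := hlt (i - 1) (by omega) (by omega)
      rw [show i - 1 + 1 = i by omega] at c
      omega
    · obtain rfl : i = 1 := by omega
      rw [Nat.sub_self, hr0] at a
      omega
  have hδpos : ∀ i, 1 ≤ i → i ≤ n → 1 ≤ δ i := by
    intro i h1
    induction i, h1 using Nat.le_induction with
    | base => intro _; omega
    | succ i h1 ih =>
      intro h2
      rw [hδ i h1 (by omega)]
      have := ih (by omega)
      have := hq i h1 (by omega)
      nlinarith
  have hmono : ∀ i, 1 ≤ i → i ≤ n - 1 → δ i ≤ δ (i + 1) := by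
    intro i h1 h2
    rw [hδ i h1 h2]
    have := hq i h1 h2
    nlinarith
  have hinv : ∀ i, 1 ≤ i → i ≤ n → ∃ σ g h : ℤ, (σ = 1 ∨ σ = -1) ∧
      σ * (u * δ (i - 1) - p * g) = r (i - 1) ∧ σ * (u * δ i - p * h) = - (r i : ℤ) ∧
      g * δ i - h * δ (i - 1) = -σ ∧ (p : ℤ) = δ i * r (i - 1) + δ (i - 1) * r i := by
    intro i h1
    induction i, h1 using Nat.le_induction with
    | base =>
      intro _
      exact ⟨-1, 1, 0, Or.inr rfl, by simp [hδ0, hr0], by simp [hδ1, hr1], by simp [hδ0, hδ1],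
        by simp [hδ0, hδ1, hr0]⟩
    | succ i h1 ih =>
      intro h2
      obtain ⟨σ, g, h, hσ, a1, a2, a3, a4⟩ := ih (by omega)
      have d1 := hδ i h1 (by omega)
      have d2 := hdiv i h1 (by omega)
      zify at d1 d2
      refine ⟨-σ, h, q i * h + g, by rcases hσ with rfl | rfl <;> simp, ?_, ?_, ?_, ?_⟩
      · simp only [Nat.add_sub_cancel]; linear_combination - a2
      · rw [d1]; linear_combination - a1 - q i * a2 - d2
      · simp only [Nat.add_sub_cancel]; rw [d1]; linear_combination - a3
      · simp only [Nat.add_sub_cancel]; rw [d1, a4]; linear_combination δ i * d2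
  have hδn : δ n = p := by
    obtain ⟨σ, g, h, hσ, a1, a2, a3, a4⟩ := hinv n (by omega) le_rfl
    rw [hrn] at a2 a4
    push_cast at a2 a4
    apply Nat.dvd_antisymm
    · refine ⟨r (n - 1), ?_⟩
      zify; linarith
    · have : (p : ℤ) ∣ (u * δ n : ℕ) := by
        refine ⟨h, ?_⟩
        push_cast
        rcases hσ with rfl | rfl <;> push_cast at a2 <;> linarith
      have := Int.natCast_dvd_natCast.1 this
      exact (Nat.Coprime.symm hgcd).dvd_of_dvd_mul_left this
  refine ⟨hq, hδpos, hmono, hδn, ?_⟩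
  intro s hs
  have hrpos : ∀ i, 1 ≤ i → i ≤ n - 1 → 0 < r i := fun i h1 h2 => by
    have := hlt i h1 h2; omega
  constructor
  · intro hrec
    have hsp : s ≤ p := by
      by_contra h
      push Not at h
      rcases hrec with ⟨c, h1, h2⟩ | ⟨c, h1, h2⟩ <;>
      · have := h2 p u (by omega) (by omega) (by rw [mul_comm (p : ℤ)]; simp)
        rw [mul_comm (p : ℤ) (u : ℤ), sub_self, mul_zero] at this
        linarith
    have hex : ∃ i, s ≤ δ (i + 1) := ⟨n - 1, by rw [show n - 1 + 1 = n by omega]; omega⟩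
    classical
    have f1 := Nat.find_spec hex
    have f2 : Nat.find hex ≤ n - 1 :=
      Nat.find_min' hex (by rw [show n - 1 + 1 = n by omega]; omega)
    have f3 := fun m => Nat.find_min hex (m := m)
    generalize Nat.find hex = i at f1 f2 f3
    rcases Nat.eq_zero_or_pos i with h | hi
    · subst h
      simp [hδ1] at f1
      exact ⟨1, le_rfl, by omega, 1, le_rfl, hq 1 le_rfl (by omega), by simp [hδ0, hδ1]; omega⟩
    · have f4 := f3 (i - 1) (by omega)
      rw [show i - 1 + 1 = i by omega] at f4
      push Not at f4
      have hdi := hδ i hi f2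
      rcases Nat.lt_or_ge 1 i with h | h
      · have hm := hmono (i - 1) (by omega) (by omega)
        rw [show i - 1 + 1 = i by omega] at hm
        have p1 := hδpos i hi (by omega)
        have p2 := hδpos (i - 1) (by omega) (by omega)
        obtain ⟨j, hj1, hj2⟩ : ∃ j, δ (i - 1) + j * δ i < s ∧ s ≤ δ (i - 1) + (j + 1) * δ i := by
          refine ⟨(s - δ (i - 1) - 1) / δ i, ?_, ?_⟩
          · have := Nat.div_mul_le_self (s - δ (i - 1) - 1) (δ i)
            omega
          · have := Nat.lt_mul_div_succ (s - δ (i - 1) - 1) p1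
            rw [mul_comm] at this
            omega
        have hjq : j < q i := by
          by_contra hc
          push Not at hc
          have : q i * δ i ≤ j * δ i := Nat.mul_le_mul_right _ hc
          omega
        rcases hj2.eq_or_lt with he | hl
        · exact ⟨i, hi, f2, j + 1, by omega, by omega, he.symm⟩
        · exfalso
          obtain ⟨σ, g, h, hσ, a1, a2, a3, a4⟩ := hinv i hi (by omega)
          have hri := hrpos i hi f2
          have hd := hdiv i hi f2
          have hapos : 0 < (r (i - 1) : ℤ) - j * r i := by
            have : (j + 1) * r i ≤ q i * r i := Nat.mul_le_mul_right _ hjq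
            zify at this hd hri
            have : (0 : ℤ) ≤ r (i + 1) := by positivity
            linarith
          have N1 : ¬ auxRec p u s σ := by
            refine aux_not_rec_of_basis p u σ (δ (i - 1) + j * δ i) (g + j * h) (δ i) h
              (r (i - 1) - j * r i) (r i) ?_ a2 ?_ ?_ ?_ ?_ hapos s ?_ ?_
            · linear_combination a1 + j * a2
            · have : (g + j * h) * δ i - h * (δ (i - 1) + j * δ i) = -σ := by
                linear_combination a3
              rw [this]; rcases hσ with rfl | rfl <;> simp
            · exact_mod_cast (by omega : 1 ≤ δ (i - 1) + j * δ i)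
            · exact_mod_cast p1
            · exact_mod_cast hri
            · zify at hl; linarith
            · exact_mod_cast hj1
          have N2 : ¬ auxRec p u s (-σ) := by
            refine aux_not_rec_of_basis p u (-σ) (δ i) h (δ (i - 1) + j * δ i) (g + j * h)
              (r i) (r (i - 1) - j * r i) ?_ ?_ ?_ ?_ ?_ hapos ?_ s ?_ ?_
            · linear_combination -a2
            · linear_combination - a1 - j * a2
            · have : h * (δ (i - 1) + j * δ i) - (g + j * h) * δ i = σ := by
                linear_combination -a3
              rw [this]; exact hσ
            · exact_mod_cast p1
            · exact_mod_cast (by omega : 1 ≤ δ (i - 1) + j * δ i)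
            · exact_mod_cast hri
            · zify at hl; linarith
            · exact_mod_cast f4
          rcases hσ with rfl | rfl
          · tauto
          · simp at N2; tauto
      · obtain rfl : i = 1 := by omega
        rw [hδ1, Nat.sub_self, hδ0, mul_one, add_zero] at hdi
        exact ⟨1, le_rfl, f2, s, hs, by omega, by simp [hδ0, hδ1]⟩
  · rintro ⟨i, hi, hin, j, hj1, hj2, he⟩
    obtain ⟨σ, g, h, hσ, a1, a2, a3, a4⟩ := hinv i hi (by omega)
    have hri := hrpos i hi hin
    have hd := hdiv i hi hin
    obtain ⟨j, rfl⟩ := Nat.exists_eq_add_of_lt (show 0 < j by omega)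
    simp only [zero_add] at *
    have hle : (r i : ℤ) ≤ r (i - 1) - j * r i := by
      have : (j + 1) * r i ≤ q i * r i := Nat.mul_le_mul_right _ hj2
      zify at this hd hri
      have : (0 : ℤ) ≤ r (i + 1) := by positivity
      linarith
    have R : auxRec p u s σ := by
      refine aux_rec_of_basis p u σ (δ (i - 1) + j * δ i) (g + j * h) (δ i) h
        (r (i - 1) - j * r i) (r i) ?_ a2 ?_ ?_ ?_ ?_ hle s ?_
      · linear_combination a1 + j * a2
      · have : (g + j * h) * δ i - h * (δ (i - 1) + j * δ i) = -σ := by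
          linear_combination a3
        rw [this]; rcases hσ with rfl | rfl <;> simp
      · positivity
      · exact_mod_cast hδpos i hi (by omega)
      · exact_mod_cast hri
      · rw [← he]; push_cast; ring
    rcases hσ with rfl | rfl
    · exact Or.inr R
    · exact Or.inl R

/-- Let `A = k[a₁,a₂]`, `p ≥ 3`, `0 < u < p/2`, `gcd(u,p) = 1`, and
`I = (a₁^p, a₂^p, a₁^u a₂^{p-u})`. Run Euclid's algorithm on `r₀ = p`, `r₁ = u`:
`r_{i-1} = qᵢrᵢ + r_{i+1}`, `r_{i+1} < rᵢ` for `1 ≤ i ≤ n-1`, and `rₙ = 0`. Define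
`δ₀ = 0`, `δ₁ = 1`, `δ_{i+1} = qᵢδᵢ + δ_{i-1}`. Then
`SD(I) = ⋃_{i=1}^{n-1} {δ_{i-1} + j·δᵢ : 1 ≤ j ≤ qᵢ}`, whose largest element is
`δₙ = p`; consequently `st(I) = q₁ + ⋯ + q_{n-1}` and `rt(I) = p`. -/
theorem stmt_18 {k : Type*} [Field k] (p u : ℕ) (hp : 3 ≤ p) (hu : 0 < u)
    (hup : 2 * u < p) (hgcd : Nat.gcd u p = 1)
    (n : ℕ) (hn : 2 ≤ n) (r q : ℕ → ℕ) (hr0 : r 0 = p) (hr1 : r 1 = u)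
    (hdiv : ∀ i, 1 ≤ i → i ≤ n - 1 → r (i - 1) = q i * r i + r (i + 1))
    (hlt : ∀ i, 1 ≤ i → i ≤ n - 1 → r (i + 1) < r i)
    (hrn : r n = 0)
    (δ : ℕ → ℕ) (hδ0 : δ 0 = 0) (hδ1 : δ 1 = 1)
    (hδ : ∀ i, 1 ≤ i → i ≤ n - 1 → δ (i + 1) = q i * δ i + δ (i - 1)) :
    let a₁ : MvPolynomial (Fin 2) k := MvPolynomial.X 0
    let a₂ : MvPolynomial (Fin 2) k := MvPolynomial.X 1
    let x : Fin 3 → MvPolynomial (Fin 2) k := ![a₁ ^ p, a₂ ^ p, a₁ ^ u * a₂ ^ (p - u)]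
    siftedDegrees x =
      ⋃ i ∈ Set.Icc 1 (n - 1), (fun j => δ (i - 1) + j * δ i) '' Set.Icc 1 (q i) ∧
    (∀ d ∈ siftedDegrees x, d ≤ δ n) ∧ δ n ∈ siftedDegrees x ∧ δ n = p ∧
    siftedType x = ∑ i ∈ Finset.Icc 1 (n - 1), q i ∧
    relType x = p := by
  intro a₁ a₂ x
  have hx : x = auxGen k p u (p - u) := rfl
  clear_value x
  subst hx
  obtain ⟨hq, hpos, hmono, hδn, hcomb⟩ := aux_comb p u hp hu hup hgcd n hn r q hr0 hr1 hdiv hlt hrn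
    δ hδ0 hδ1 hδ
  have hmono' : ∀ i j, 1 ≤ i → i ≤ j → j ≤ n → δ i ≤ δ j := by
    intro i j h1 h2
    induction j, h2 using Nat.le_induction with
    | base => intro _; exact le_rfl
    | succ j h2 ih => intro h3; exact (ih (by omega)).trans (hmono j (by omega) (by omega))
  have hupper : ∀ i j, 1 ≤ i → i ≤ n - 1 → j ≤ q i → δ (i - 1) + j * δ i ≤ δ (i + 1) := by
    intro i j h1 h2 h3
    rw [hδ i h1 h2]
    have : j * δ i ≤ q i * δ i := Nat.mul_le_mul_right _ h3
    omega
  have hmem : ∀ s, s ∈ siftedDegrees (auxGen k p u (p - u)) ↔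
      ∃ i, 1 ≤ i ∧ i ≤ n - 1 ∧ ∃ j, 1 ≤ j ∧ j ≤ q i ∧ δ (i - 1) + j * δ i = s := by
    intro s
    unfold siftedDegrees
    simp only [Set.mem_union, Set.mem_singleton_iff, Set.mem_setOf_eq]
    constructor
    · rintro (rfl | ⟨h1, h2⟩)
      · exact ⟨1, le_rfl, by omega, 1, le_rfl, hq 1 le_rfl (by omega), by simp [hδ0, hδ1]⟩
      · rw [← hcomb s (by omega)]
        by_contra hc
        push Not at hc
        exact h2 (aux_stable k p u (p - u) s hu (by omega) (by omega) h1 hc.1 hc.2)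
    · rintro ⟨i, h1, h2, j, h3, h4, h5⟩
      have hs : 1 ≤ s := by
        have := hpos i h1 (by omega)
        have : 1 * 1 ≤ j * δ i := Nat.mul_le_mul h3 this
        omega
      rcases Nat.lt_or_ge 1 s with h | h
      · right
        refine ⟨h, ?_⟩
        exact aux_not_stable k p u (p - u) s hu (by omega) (by omega) h
          ((hcomb s hs).2 ⟨i, h1, h2, j, h3, h4, h5⟩)
      · left; omega
  have hset : siftedDegrees (auxGen k p u (p - u)) =
      ⋃ i ∈ Set.Icc 1 (n - 1), (fun j => δ (i - 1) + j * δ i) '' Set.Icc 1 (q i) := by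
    ext s
    rw [hmem]
    simp only [Set.mem_iUnion, Set.mem_image, Set.mem_Icc, exists_prop, and_assoc]
  have hle : ∀ d ∈ siftedDegrees (auxGen k p u (p - u)), d ≤ δ n := by
    intro d hd
    obtain ⟨i, h1, h2, j, h3, h4, h5⟩ := (hmem d).1 hd
    rw [← h5]
    exact (hupper i j h1 h2 h4).trans (hmono' _ _ (by omega) (by omega) le_rfl)
  have hin : δ n ∈ siftedDegrees (auxGen k p u (p - u)) := by
    rw [hmem]
    refine ⟨n - 1, by omega, le_rfl, q (n - 1), hq _ (by omega) le_rfl, le_rfl, ?_⟩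
    have := hδ (n - 1) (by omega) le_rfl
    rw [show n - 1 + 1 = n by omega] at this
    omega
  refine ⟨hset, hle, hin, hδn, ?_, ?_⟩
  · classical
    unfold siftedType
    have hfin : siftedDegrees (auxGen k p u (p - u)) =
        (((Finset.Icc 1 (n - 1)).biUnion fun i =>
          (Finset.Icc 1 (q i)).image fun j => δ (i - 1) + j * δ i : Finset ℕ) : Set ℕ) := by
      rw [hset]; simp
    rw [hfin, Set.ncard_coe_finset, Finset.card_biUnion]
    · refine Finset.sum_congr rfl fun i hi => ?_
      rw [Finset.mem_Icc] at hi
      rw [Finset.card_image_of_injective, Nat.card_Icc]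
      · omega
      · intro a b hab
        have := hpos i hi.1 (by omega)
        simp only [add_right_inj] at hab
        exact Nat.eq_of_mul_eq_mul_right this hab
    · have hdisj : ∀ i i', 1 ≤ i → i < i' → i' ≤ n - 1 → Disjoint
          ((Finset.Icc 1 (q i)).image fun j => δ (i - 1) + j * δ i)
          ((Finset.Icc 1 (q i')).image fun j => δ (i' - 1) + j * δ i') := by
        intro i i' h1 h2 h3
        rw [Finset.disjoint_left]
        intro s hs hs'
        simp only [Finset.mem_image, Finset.mem_Icc] at hs hs'
        obtain ⟨j, ⟨j1, j2⟩, rfl⟩ := hs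
        obtain ⟨j', ⟨j1', j2'⟩, he⟩ := hs'
        have e1 := hupper i j h1 (by omega) j2
        have e2 := hmono' (i + 1) i' (by omega) (by omega) (by omega)
        have e3 := hpos (i' - 1) (by omega) (by omega)
        have e4 : 1 * δ i' ≤ j' * δ i' := Nat.mul_le_mul_right _ j1'
        omega
      intro i hi i' hi' hne
      rw [Finset.mem_coe, Finset.mem_Icc] at hi hi'
      rcases Nat.lt_or_gt_of_ne hne with h | h
      · exact hdisj i i' hi.1 h hi'.2
      · exact (hdisj i' i hi'.1 h hi.2).symm
  · unfold relType
    rw [hδn] at hle hin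
    apply le_antisymm
    · apply Nat.sInf_le
      refine ⟨by omega, fun m hm => ?_⟩
      by_contra hc
      have := hle m (Or.inr ⟨by omega, hc⟩)
      omega
    · apply le_csInf
      · refine ⟨p, by omega, fun m hm => ?_⟩
        by_contra hc
        have := hle m (Or.inr ⟨by omega, hc⟩)
        omega
      · rintro s ⟨hs1, hs⟩
        by_contra hc
        push Not at hc
        rcases hin with h | h
        · simp at h; omega
        · exact h.2 (hs p (by omega))
end

section
/- Let (F_i)_{i≥0} be the Fibonacci sequence (F_0 = 0, F_1 = 1, F_{i+2} = F_{i+1} + F_i). Let k be a field, A = k[a_1,a_2], ℓ ≥ 4 an integer, and I = (a_1^{F_{ℓ+2}}, a_2^{F_{ℓ+2}}, a_1^{F_ℓ} a_2^{F_{ℓ+1}}). Then the set of sifted degrees of I is SD(I) = {F_2, F_3, F_4, …, F_{ℓ+2}} = {F_i : 2 ≤ i ≤ ℓ+2}; consequently st(I) = ℓ + 1 and rt(I) = F_{ℓ+2}. -/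
/-- total weight of an exponent vector -/
noncomputable def wtS {r : ℕ} (d : Fin r → (Fin 2 →₀ ℕ)) : (Fin r →₀ ℕ) →ₗ[ℕ] (Fin 2 →₀ ℕ) :=
  Finsupp.linearCombination ℕ d

/-- monomial generators -/
noncomputable def monGen (k : Type*) [Field k] {r : ℕ} (d : Fin r → (Fin 2 →₀ ℕ)) :
    Fin r → MvPolynomial (Fin 2) k := fun i => MvPolynomial.monomial (d i) 1

/-- the Rees presentation -/
noncomputable def reesPhi {A : Type*} [CommRing A] {r : ℕ} (x : Fin r → A) :
    MvPolynomial (Fin r) A →ₐ[A] Polynomial A :=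
  MvPolynomial.aeval (fun i => Polynomial.C (x i) * Polynomial.X)

theorem mem_reesRel {A : Type*} [CommRing A] {r : ℕ} (x : Fin r → A) (n : ℕ)
    (f : MvPolynomial (Fin r) A) :
    f ∈ reesRel x n ↔ reesPhi x f = 0 ∧ f.IsHomogeneous n := by
  simp [reesRel, reesPhi, RingHom.mem_ker, MvPolynomial.mem_homogeneousSubmodule]

theorem reesPhi_monomial {k : Type*} [Field k] {r : ℕ} (d : Fin r → (Fin 2 →₀ ℕ))
    (w : Fin r →₀ ℕ) (c : MvPolynomial (Fin 2) k) :
    reesPhi (monGen k d) (MvPolynomial.monomial w c) =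
      Polynomial.monomial w.degree (c * MvPolynomial.monomial (wtS d w) 1) := by
  induction w using Finsupp.induction_linear generalizing c with
  | zero => simp [reesPhi, wtS]
  | add f g hf hg =>
    have : MvPolynomial.monomial (f + g) c =
        MvPolynomial.monomial f c * MvPolynomial.monomial g 1 := by
      rw [MvPolynomial.monomial_mul, mul_one]
    rw [this, map_mul, hf, hg, Polynomial.monomial_mul_monomial, map_add, map_add,
      one_mul, mul_assoc, MvPolynomial.monomial_mul, one_mul]
  | single i m =>
    rw [reesPhi, MvPolynomial.aeval_monomial]
    simp only [pow_zero, Finsupp.prod_single_index, Finsupp.degree_single, wtS,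
      Finsupp.linearCombination_single, monGen]
    rw [mul_pow, ← Polynomial.C_pow, MvPolynomial.monomial_pow, one_pow,
      ← Polynomial.C_mul_X_pow_eq_monomial, Polynomial.C_mul, mul_assoc]
    rfl

theorem isHomogeneous_mem_support {A : Type*} [CommRing A] {r : ℕ} {n : ℕ}
    {f : MvPolynomial (Fin r) A} (hf : f.IsHomogeneous n) {w : Fin r →₀ ℕ} (hw : w ∈ f.support) :
    w.degree = n := by
  have := hf (MvPolynomial.mem_support_iff.mp hw)
  rwa [Finsupp.degree_eq_weight_one]

theorem phi_coeff {k : Type*} [Field k] {r : ℕ} (d : Fin r → (Fin 2 →₀ ℕ)) {n : ℕ}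
    {f : MvPolynomial (Fin r) (MvPolynomial (Fin 2) k)} (hf : f.IsHomogeneous n) :
    (reesPhi (monGen k d) f).coeff n =
      ∑ w ∈ f.support, f.coeff w * MvPolynomial.monomial (wtS d w) 1 := by
  conv_lhs => rw [f.as_sum]
  rw [map_sum, Polynomial.finsetSum_coeff]
  refine Finset.sum_congr rfl fun w hw => ?_
  rw [reesPhi_monomial, isHomogeneous_mem_support hf hw, Polynomial.coeff_monomial, if_pos rfl]

theorem binom_mem {k : Type*} [Field k] {r : ℕ} (d : Fin r → (Fin 2 →₀ ℕ)) {n : ℕ}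
    {e e' : Fin 2 →₀ ℕ} {w w' : Fin r →₀ ℕ} (hw : w.degree = n) (hw' : w'.degree = n)
    (h : e + wtS d w = e' + wtS d w') :
    MvPolynomial.monomial w (MvPolynomial.monomial e (1 : k)) -
      MvPolynomial.monomial w' (MvPolynomial.monomial e' (1 : k)) ∈ reesRel (monGen k d) n := by
  rw [mem_reesRel]
  constructor
  · rw [map_sub, reesPhi_monomial, reesPhi_monomial, MvPolynomial.monomial_mul,
      MvPolynomial.monomial_mul, h, hw, hw', sub_self]
  · exact (MvPolynomial.isHomogeneous_monomial _ hw).sub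
      (MvPolynomial.isHomogeneous_monomial _ hw')

theorem mul_le_rel {A : Type*} [CommRing A] {r : ℕ} (x : Fin r → A) {n : ℕ} (hn : 1 ≤ n) :
    MvPolynomial.homogeneousSubmodule (Fin r) A 1 * reesRel x (n - 1) ≤ reesRel x n := by
  rw [Submodule.mul_le]
  intro l hl g hg
  rw [mem_reesRel] at hg ⊢
  refine ⟨by rw [map_mul, hg.1, mul_zero], ?_⟩
  have := ((MvPolynomial.mem_homogeneousSubmodule _ _).1 hl).mul hg.2
  rwa [Nat.add_sub_cancel' hn] at this

theorem stable_of {k : Type*} [Field k] {r : ℕ} (d : Fin r → (Fin 2 →₀ ℕ)) {n : ℕ} (hn : 1 ≤ n)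
    (H : ∀ (e e' : Fin 2 →₀ ℕ) (w w' : Fin r →₀ ℕ), w.degree = n → w'.degree = n →
      e + wtS d w = e' + wtS d w' →
      MvPolynomial.monomial w (MvPolynomial.monomial e (1 : k)) -
      MvPolynomial.monomial w' (MvPolynomial.monomial e' (1 : k)) ∈
        MvPolynomial.homogeneousSubmodule (Fin r) (MvPolynomial (Fin 2) k) 1 *
          reesRel (monGen k d) (n - 1)) :
    reesRelStable (monGen k d) n := by
  classical
  refine le_antisymm ?_ (mul_le_rel _ hn)
  intro f hf
  rw [mem_reesRel] at hf
  set M := (MvPolynomial.homogeneousSubmodule (Fin r) (MvPolynomial (Fin 2) k) 1 *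
          reesRel (monGen k d) (n - 1)).restrictScalars k with hM
  let ρ : MvPolynomial (Fin 2) k →ₗ[k] (MvPolynomial (Fin r) (MvPolynomial (Fin 2) k) ⧸ M) :=
    (MvPolynomial.basisMonomials (Fin 2) k).constr k (fun μ =>
      if h : ∃ q : (Fin 2 →₀ ℕ) × (Fin r →₀ ℕ), q.2.degree = n ∧ q.1 + wtS d q.2 = μ then
        M.mkQ (MvPolynomial.monomial h.choose.2 (MvPolynomial.monomial h.choose.1 (1 : k)))
      else 0)
  have hρ : ∀ (e : Fin 2 →₀ ℕ) (w : Fin r →₀ ℕ), w.degree = n →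
      ρ (MvPolynomial.monomial (e + wtS d w) 1) =
        M.mkQ (MvPolynomial.monomial w (MvPolynomial.monomial e (1 : k))) := by
    intro e w hw
    have h : ∃ q : (Fin 2 →₀ ℕ) × (Fin r →₀ ℕ), q.2.degree = n ∧ q.1 + wtS d q.2 = e + wtS d w :=
      ⟨(e, w), hw, rfl⟩
    have h1 := (MvPolynomial.basisMonomials (Fin 2) k).constr_basis k (fun μ =>
      if h : ∃ q : (Fin 2 →₀ ℕ) × (Fin r →₀ ℕ), q.2.degree = n ∧ q.1 + wtS d q.2 = μ then
        M.mkQ (MvPolynomial.monomial h.choose.2 (MvPolynomial.monomial h.choose.1 (1 : k)))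
      else 0) (e + wtS d w)
    rw [MvPolynomial.coe_basisMonomials] at h1
    refine h1.trans ?_
    simp only [dif_pos h]
    rw [Submodule.mkQ_apply, Submodule.mkQ_apply, Submodule.Quotient.eq]
    exact H _ _ _ _ h.choose_spec.1 hw h.choose_spec.2
  have hρ2 : ∀ (w : Fin r →₀ ℕ), w.degree = n → ∀ c : MvPolynomial (Fin 2) k,
      ρ (c * MvPolynomial.monomial (wtS d w) 1) = M.mkQ (MvPolynomial.monomial w c) := by
    intro w hw c
    induction c using MvPolynomial.induction_on' with
    | monomial e a =>
      have h1 : MvPolynomial.monomial e a = a • MvPolynomial.monomial e (1 : k) := by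
        rw [MvPolynomial.smul_monomial, smul_eq_mul, mul_one]
      have h2 : MvPolynomial.monomial w (a • MvPolynomial.monomial e (1 : k)) =
          a • MvPolynomial.monomial w (MvPolynomial.monomial e (1 : k)) :=
        (MvPolynomial.smul_monomial _).symm
      rw [h1, h2, smul_mul_assoc, map_smul, map_smul, MvPolynomial.monomial_mul, mul_one, hρ e w hw]
    | add p q hp hq => rw [add_mul, map_add, hp, hq, map_add, map_add]
  have h3 : M.mkQ f = ρ ((reesPhi (monGen k d) f).coeff n) := by
    rw [phi_coeff d hf.2, map_sum]
    conv_lhs => rw [f.as_sum]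
    rw [map_sum]
    exact Finset.sum_congr rfl fun w hw =>
      (hρ2 w (isHomogeneous_mem_support hf.2 hw) _).symm
  rw [hf.1, Polynomial.coeff_zero, map_zero, Submodule.mkQ_apply, Submodule.Quotient.mk_eq_zero] at h3
  exact h3

theorem unstable_of {k : Type*} [Field k] {r : ℕ} (d : Fin r → (Fin 2 →₀ ℕ)) {n : ℕ} (hn : 1 ≤ n)
    (j : Fin r) (e e' : Fin 2 →₀ ℕ) (w' : Fin r →₀ ℕ) (hw' : w'.degree = n)
    (hne : w' ≠ Finsupp.single j n)
    (h : e + wtS d (Finsupp.single j n) = e' + wtS d w')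
    (H : ∀ v : Fin r →₀ ℕ, v.degree = n → 0 < v j →
      wtS d v ≤ e + wtS d (Finsupp.single j n) → v = Finsupp.single j n) :
    ¬ reesRelStable (monGen k d) n := by
  classical
  intro hs
  have hs1 : Finsupp.single j n = Finsupp.single j (n - 1) + Finsupp.single j 1 := by
    rw [← Finsupp.single_add, Nat.sub_add_cancel hn]
  have key : ∀ g ∈ reesRel (monGen k d) (n - 1),
      (g.coeff (Finsupp.single j (n - 1))).coeff e = 0 := by
    intro g hg
    rw [mem_reesRel] at hg
    have h1 := phi_coeff d hg.2
    rw [hg.1, Polynomial.coeff_zero] at h1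
    have h2 := congrArg (MvPolynomial.coeff (e + wtS d (Finsupp.single j (n - 1)))) h1
    rw [MvPolynomial.coeff_zero, MvPolynomial.coeff_sum, Finset.sum_eq_single
      (Finsupp.single j (n - 1))] at h2
    · rw [MvPolynomial.coeff_mul_monomial, mul_one] at h2
      exact h2.symm
    · intro v hv hvne
      rw [MvPolynomial.coeff_mul_monomial', if_neg]
      intro hle
      apply hvne
      have h3 := H (v + Finsupp.single j 1) (by
        rw [map_add, isHomogeneous_mem_support hg.2 hv, Finsupp.degree_single]; omega) (by simp) (by
        rw [hs1, map_add, map_add, ← add_assoc]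
        exact add_le_add_left hle _)
      rw [hs1] at h3
      exact add_right_cancel h3
    · intro h4
      rw [MvPolynomial.notMem_support_iff.mp h4, zero_mul, MvPolynomial.coeff_zero]
  have key2 : ∀ f ∈ MvPolynomial.homogeneousSubmodule (Fin r) (MvPolynomial (Fin 2) k) 1 *
      reesRel (monGen k d) (n - 1), (f.coeff (Finsupp.single j n)).coeff e = 0 := by
    intro f hf
    refine Submodule.mul_induction_on hf ?_ ?_
    · intro l hl g hg
      have h5 : (l * g).coeff (Finsupp.single j n) =
          l.coeff (Finsupp.single j 1) * g.coeff (Finsupp.single j (n - 1)) := by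
        rw [MvPolynomial.coeff_mul, Finset.sum_eq_single (Finsupp.single j 1, Finsupp.single j (n-1))]
        · rintro ⟨u, v⟩ huv hne
          rw [Finset.HasAntidiagonal.mem_antidiagonal] at huv
          simp only at huv hne ⊢
          by_cases hu : l.coeff u = 0
          · rw [hu, zero_mul]
          exfalso
          have hdeg := isHomogeneous_mem_support ((MvPolynomial.mem_homogeneousSubmodule _ _).1 hl)
            (MvPolynomial.mem_support_iff.mpr hu)
          have hu0 : ∀ i, i ≠ j → u i = 0 := by
            intro i hi
            have := DFunLike.congr_fun huv i
            rw [Finsupp.add_apply, Finsupp.single_eq_of_ne hi] at this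
            omega
          have hu1 : u = Finsupp.single j (u j) := by
            ext i
            by_cases hi : i = j
            · subst hi; simp
            · rw [hu0 i hi, Finsupp.single_eq_of_ne hi]
          rw [hu1, Finsupp.degree_single] at hdeg
          rw [hdeg] at hu1
          apply hne
          rw [hu1, hs1, add_comm] at huv
          rw [hu1, add_right_cancel huv]
        · intro h6
          exact absurd (by rw [Finset.HasAntidiagonal.mem_antidiagonal, hs1, add_comm]) h6
      rw [h5]
      have := key _ (Submodule.smul_mem _ (l.coeff (Finsupp.single j 1)) hg)
      rwa [MvPolynomial.coeff_smul, smul_eq_mul] at this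
    · intro a b ha hb
      rw [MvPolynomial.coeff_add, MvPolynomial.coeff_add, ha, hb, add_zero]
  have hb := binom_mem (k := k) d (Finsupp.degree_single j n) hw' h
  rw [hs] at hb
  have := key2 _ hb
  rw [MvPolynomial.coeff_sub, MvPolynomial.coeff_monomial, MvPolynomial.coeff_monomial, if_pos rfl,
    if_neg hne, sub_zero, MvPolynomial.coeff_monomial, if_pos rfl] at this
  exact one_ne_zero this

theorem fib_delta (s t : ℕ) :
    (Nat.fib (t + 2) : ℤ) * Nat.fib (t + s) - Nat.fib t * Nat.fib (t + s + 2) =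
      (-1) ^ t * Nat.fib s := by
  induction t with
  | zero => simp
  | succ t ih =>
    have h1 : (Nat.fib (t + 3) : ℤ) = Nat.fib (t + 1) + Nat.fib (t + 2) := by
      exact_mod_cast Nat.fib_add_two (n := t + 1)
    have h2 : (Nat.fib (t + s + 3) : ℤ) = Nat.fib (t + s + 1) + Nat.fib (t + s + 2) := by
      exact_mod_cast Nat.fib_add_two (n := t + s + 1)
    have h3 : (Nat.fib (t + 2) : ℤ) = Nat.fib t + Nat.fib (t + 1) := by
      exact_mod_cast Nat.fib_add_two (n := t)
    have h4 : (Nat.fib (t + s + 2) : ℤ) = Nat.fib (t + s) + Nat.fib (t + s + 1) := by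
      exact_mod_cast Nat.fib_add_two (n := t + s)
    have e1 : t + 1 + 2 = t + 3 := by ring
    have e2 : t + 1 + s = t + s + 1 := by ring
    have e3 : t + s + 1 + 2 = t + s + 3 := by ring
    rw [e1, e2, e3, pow_succ]
    linear_combination (-1) * ih + (Nat.fib (t + s + 1) : ℤ) * h1 - (Nat.fib (t + 1) : ℤ) * h2
      + (Nat.fib (t + s + 2) : ℤ) * h3 - (Nat.fib (t + 2) : ℤ) * h4

theorem nonrecord_aux (b0 b1 b2 b3 b4 g0 g1 p N n I ε : ℤ) (hε : ε = 1 ∨ ε = -1)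
    (hb3 : 0 < b3) (hg0 : 0 ≤ g0) (hg1 : 0 ≤ g1)
    (d2 : b2 * p - b0 * N = ε * (g0 + g1)) (d3 : b3 * p - b1 * N = -ε * g1)
    (d4 : b4 * p - b2 * N = ε * g0) (det : b3 * b2 - b1 * b4 = -ε)
    (hn1 : b3 < n) (hn2 : n < b4) :
    ∃ m c : ℤ, ((m = b2 ∧ c = b0) ∨ (m = b3 ∧ c = b1)) ∧
      ((0 ≤ m * p - c * N ∧ m * p - c * N ≤ p * n - N * I) ∨
       (m * p - c * N ≤ 0 ∧ p * n - N * I ≤ m * p - c * N)) := by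
  obtain ⟨u, hu⟩ : ∃ u, u = -ε * (b2 * n - b4 * I) := ⟨_, rfl⟩
  obtain ⟨v, hv⟩ : ∃ v, v = -ε * (b3 * I - b1 * n) := ⟨_, rfl⟩
  have hε2 : ε * ε = 1 := by rcases hε with h | h <;> rw [h] <;> norm_num
  have hn : u * b3 + v * b4 = n := by
    rw [hu, hv]; linear_combination (-ε * n) * det + n * hε2
  have hI : u * b1 + v * b2 = I := by
    rw [hu, hv]; linear_combination (-ε * I) * det + I * hε2
  have hD : p * n - N * I = ε * (v * g0 - u * g1) := by
    rw [← hn, ← hI]; linear_combination u * d3 + v * d4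
  rcases lt_or_ge 0 u with h | h
  · have hv0 : v ≤ 0 := by
      by_contra hc
      nlinarith
    refine ⟨b3, b1, Or.inr ⟨rfl, rfl⟩, ?_⟩
    rw [d3, hD]
    have h1 : 0 ≤ (u - 1) * g1 := mul_nonneg (by linarith) hg1
    have h2 : 0 ≤ -v * g0 := mul_nonneg (by linarith) hg0
    rcases hε with h | h <;> rw [h]
    · right; constructor <;> linarith
    · left; constructor <;> linarith
  · have hv0 : 1 ≤ v := by
      by_contra hc
      nlinarith
    have hu0 : u ≤ -1 := by
      by_contra hc
      have : u = 0 := by omega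
      rw [this] at hn
      nlinarith
    refine ⟨b2, b0, Or.inl ⟨rfl, rfl⟩, ?_⟩
    rw [d2, hD]
    have h1 : 0 ≤ (-u - 1) * g1 := mul_nonneg (by linarith) hg1
    have h2 : 0 ≤ (v - 1) * g0 := mul_nonneg (by linarith) hg0
    rcases hε with h | h <;> rw [h]
    · left; constructor <;> linarith
    · right; constructor <;> linarith

theorem record_aux (b0 b1 b2 b3 g0 g1 p N m c ε : ℤ) (hε : ε = 1 ∨ ε = -1)
    (hb2 : 0 < b2) (hg0 : 0 ≤ g0) (hg1 : 0 < g1)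
    (d2 : b2 * p - b0 * N = ε * g1) (d3 : b3 * p - b1 * N = -ε * g0)
    (det : b2 * b1 - b0 * b3 = ε) (hm1 : 0 < m) (hm2 : m < b3)
    (h : (0 ≤ m * p - c * N ∧ m * p - c * N ≤ b3 * p - b1 * N) ∨
       (m * p - c * N ≤ 0 ∧ b3 * p - b1 * N ≤ m * p - c * N)) : False := by
  obtain ⟨u, hu⟩ : ∃ u, u = ε * (b1 * m - b3 * c) := ⟨_, rfl⟩
  obtain ⟨v, hv⟩ : ∃ v, v = ε * (b2 * c - b0 * m) := ⟨_, rfl⟩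
  have hε2 : ε * ε = 1 := by rcases hε with h | h <;> rw [h] <;> norm_num
  have hm : u * b2 + v * b3 = m := by
    rw [hu, hv]; linear_combination (ε * m) * det + m * hε2
  have hc : u * b0 + v * b1 = c := by
    rw [hu, hv]; linear_combination (ε * c) * det + c * hε2
  have hD : m * p - c * N = ε * (u * g1 - v * g0) := by
    rw [← hm, ← hc]; linear_combination u * d2 + v * d3
  rw [hD, d3] at h
  have hb : 0 ≤ v * g0 - u * g1 ∧ v * g0 - u * g1 ≤ g0 := by
    rcases hε with h' | h' <;> rw [h'] at h <;> rcases h with h | h <;> constructor <;> linarith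
  rcases le_or_gt v 0 with hv0 | hv0
  · have hu0 : 1 ≤ u := by
      by_contra hc
      nlinarith
    nlinarith
  · have hu0 : u ≤ -1 := by
      by_contra hc
      nlinarith
    nlinarith

theorem eps_cases (t : ℕ) : ((-1 : ℤ)) ^ t = 1 ∨ ((-1 : ℤ)) ^ t = -1 := neg_one_pow_eq_or ℤ t

/-- record statement for Fibonacci numbers -/
theorem record_fib (t s m : ℕ) (c : ℤ) (hm1 : 0 < m) (hm2 : m < Nat.fib (t + 3))
    (h : (0 ≤ (m : ℤ) * Nat.fib (t + s + 1) - c * Nat.fib (t + s + 3) ∧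
        (m : ℤ) * Nat.fib (t + s + 1) - c * Nat.fib (t + s + 3) ≤
          Nat.fib (t + 3) * Nat.fib (t + s + 1) - Nat.fib (t + 1) * Nat.fib (t + s + 3)) ∨
       ((m : ℤ) * Nat.fib (t + s + 1) - c * Nat.fib (t + s + 3) ≤ 0 ∧
          (Nat.fib (t + 3) : ℤ) * Nat.fib (t + s + 1) - Nat.fib (t + 1) * Nat.fib (t + s + 3) ≤
          (m : ℤ) * Nat.fib (t + s + 1) - c * Nat.fib (t + s + 3))) : False := by
  have d2 := fib_delta (s + 1) t
  have d3 := fib_delta s (t + 1)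
  have det := fib_delta 1 t
  rw [show t + 1 + 2 = t + 3 by ring, show t + 1 + s = t + s + 1 by ring,
    show t + s + 1 + 2 = t + s + 3 by ring, pow_succ] at d3
  rw [← add_assoc, show t + s + 1 + 2 = t + s + 3 by ring] at d2
  rw [show t + 1 + 2 = t + 3 by ring, Nat.fib_one, Nat.cast_one, mul_one] at det
  refine record_aux (Nat.fib t) (Nat.fib (t + 1)) (Nat.fib (t + 2)) (Nat.fib (t + 3)) (Nat.fib s)
    (Nat.fib (s + 1)) _ _ m c ((-1) ^ t) (eps_cases t) ?_ ?_ ?_ d2 ?_ det ?_ ?_ h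
  · exact_mod_cast Nat.fib_pos.mpr (by omega)
  · positivity
  · exact_mod_cast Nat.fib_pos.mpr (by omega)
  · rw [d3]; ring
  · exact_mod_cast hm1
  · exact_mod_cast hm2

theorem nonrecord_fib (t s n I : ℕ) (h1 : Nat.fib (t + 3) < n) (h2 : n < Nat.fib (t + 4)) :
    ∃ m c : ℕ, 1 ≤ m ∧ m < n ∧
      ((0 ≤ (m : ℤ) * Nat.fib (t + s + 2) - c * Nat.fib (t + s + 4) ∧
        (m : ℤ) * Nat.fib (t + s + 2) - c * Nat.fib (t + s + 4) ≤
          Nat.fib (t + s + 2) * n - Nat.fib (t + s + 4) * I) ∨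
       ((m : ℤ) * Nat.fib (t + s + 2) - c * Nat.fib (t + s + 4) ≤ 0 ∧
          (Nat.fib (t + s + 2) : ℤ) * n - Nat.fib (t + s + 4) * I ≤
          (m : ℤ) * Nat.fib (t + s + 2) - c * Nat.fib (t + s + 4))) := by
  have d2 := fib_delta (s + 2) t
  have d3 := fib_delta (s + 1) (t + 1)
  have d4 := fib_delta s (t + 2)
  have det := fib_delta 1 (t + 1)
  rw [← add_assoc, show t + s + 2 + 2 = t + s + 4 by ring, Nat.fib_add_two (n := s)] at d2
  rw [show t + 1 + 2 = t + 3 by ring, show t + 1 + (s + 1) = t + s + 2 by ring,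
    show t + s + 2 + 2 = t + s + 4 by ring, pow_succ] at d3
  rw [show t + 2 + 2 = t + 4 by ring, show t + 2 + s = t + s + 2 by ring,
    show t + s + 2 + 2 = t + s + 4 by ring, pow_add] at d4
  rw [show t + 1 + 1 = t + 2 by ring, show t + 1 + 2 = t + 3 by ring,
    show t + 2 + 2 = t + 4 by ring, Nat.fib_one, Nat.cast_one, mul_one, pow_succ] at det
  have hb2 : 0 < Nat.fib (t + 2) := Nat.fib_pos.mpr (by omega)
  have hb3 : 0 < Nat.fib (t + 3) := Nat.fib_pos.mpr (by omega)
  have hb23 : Nat.fib (t + 2) ≤ Nat.fib (t + 3) := Nat.fib_mono (by omega)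
  obtain ⟨m, c, hmc, h⟩ := nonrecord_aux (Nat.fib t) (Nat.fib (t + 1)) (Nat.fib (t + 2))
    (Nat.fib (t + 3)) (Nat.fib (t + 4)) (Nat.fib s) (Nat.fib (s + 1)) (Nat.fib (t + s + 2))
    (Nat.fib (t + s + 4)) n I ((-1) ^ t) (eps_cases t) (by exact_mod_cast hb3) (by positivity)
    (by positivity) (by rw [d2]; push_cast; ring) (by rw [d3]; ring) (by rw [d4]; ring)
    (by rw [det]; ring) (by exact_mod_cast h1) (by exact_mod_cast h2)
  rcases hmc with ⟨rfl, rfl⟩ | ⟨rfl, rfl⟩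
  · exact ⟨Nat.fib (t + 2), Nat.fib t, by omega, by omega, h⟩
  · exact ⟨Nat.fib (t + 3), Nat.fib (t + 1), by omega, by omega, h⟩

/-- the intermediate monomial condition -/
def InterCond (p q n : ℕ) : Prop := ∀ I J : ℕ, 1 ≤ I → 1 ≤ J → I + J = n →
  ∃ i j m : ℕ, i + j + m = n ∧ 1 ≤ m ∧ m < n ∧
    (p + q) * i + p * m ≤ max ((p + q) * I) (p * n) ∧
    (p + q) * j + q * m ≤ max ((p + q) * J) (q * n)

theorem inter_of_bounds (p q n : ℕ)
    (h : ∀ I J : ℕ, 1 ≤ I → 1 ≤ J → I + J = n →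
      ∃ i j m : ℕ, i + j + m = n ∧ 1 ≤ m ∧ m < n ∧
      (((p + q) * i + p * m ≤ (p + q) * I ∧ (p + q) * j + q * m ≤ q * n) ∨
        ((p + q) * i + p * m ≤ p * n ∧ (p + q) * j + q * m ≤ (p + q) * J))) : InterCond p q n := by
  intro I J hI hJ hIJ
  obtain ⟨i, j, m, h1, h2, h3, h4⟩ := h I J hI hJ hIJ
  refine ⟨i, j, m, h1, h2, h3, ?_⟩
  simp only [le_max_iff]
  tauto

theorem inter_big (p q n : ℕ) (hp : 0 < p) (hn : p + q < n) : InterCond p q n := by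
  apply inter_of_bounds
  intro I J hI hJ hIJ
  obtain ⟨m, rfl⟩ := Nat.exists_eq_add_of_lt hn
  refine ⟨p, q, m + 1, by omega, by omega, by omega, ?_⟩
  rcases le_total ((p + q) * I) (p * (p + q + m + 1)) with h | h
  · right
    constructor
    · apply le_of_eq; ring
    · nlinarith
  · left
    constructor
    · nlinarith
    · apply le_of_eq; ring

theorem inter_fib (t s n : ℕ) (h1 : Nat.fib (t + 3) < n) (h2 : n < Nat.fib (t + 4)) :
    InterCond (Nat.fib (t + s + 2)) (Nat.fib (t + s + 3)) n := by
  apply inter_of_bounds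
  intro I J hI hJ hIJ
  obtain ⟨m, c, hm1, hm2, h⟩ := nonrecord_fib t s n I h1 h2
  rw [Nat.fib_add_two (n := t + s + 2)] at h
  have hp : 0 < Nat.fib (t + s + 2) := Nat.fib_pos.mpr (by omega)
  have hq : 0 < Nat.fib (t + s + 3) := Nat.fib_pos.mpr (by omega)
  rw [show t + s + 2 + 1 = t + s + 3 by ring] at h
  generalize Nat.fib (t + s + 2) = p at *
  generalize Nat.fib (t + s + 3) = q at *
  clear h1 h2
  subst hIJ
  push_cast at h
  zify at hp hq hm1 hm2 hI hJ ⊢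
  rcases h with ⟨ha, hb⟩ | ⟨ha, hb⟩
  · by_cases hcase : ((p : ℤ) + q) * I + p ≤ p * (I + J)
    · refine ⟨0, 1, I + J - 1, by omega, by omega, by omega, Or.inr ?_⟩
      rw [Nat.cast_sub (by omega)]
      push_cast
      constructor <;> nlinarith
    · have hc : (c : ℤ) ≤ I := by
        by_contra hc
        nlinarith
      have hj : (I : ℤ) - c + m ≤ I + J := by
        by_contra hj
        nlinarith
      refine ⟨I - c, I + J - m - (I - c), m, by omega, by omega, by omega, Or.inr ?_⟩
      have e1 : ((I - c : ℕ) : ℤ) = I - c := by omega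
      have e2 : ((I + J - m - (I - c) : ℕ) : ℤ) = J - m + c := by omega
      rw [e1, e2]
      constructor <;> nlinarith
  · by_cases hcase : (p : ℤ) * (I + J) + q ≤ (p + q) * I
    · refine ⟨1, 0, I + J - 1, by omega, by omega, by omega, Or.inl ?_⟩
      rw [Nat.cast_sub (by omega)]
      push_cast
      constructor <;> nlinarith
    · have hc : (c : ℤ) ≤ I := by
        by_contra hc
        nlinarith
      have hj : (I : ℤ) - c + m ≤ I + J := by
        by_contra hj
        nlinarith
      refine ⟨I - c, I + J - m - (I - c), m, by omega, by omega, by omega, Or.inl ?_⟩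
      have e1 : ((I - c : ℕ) : ℤ) = I - c := by omega
      have e2 : ((I + J - m - (I - c) : ℕ) : ℤ) = J - m + c := by omega
      rw [e1, e2]
      constructor <;> nlinarith

/-- the three exponent vectors -/
noncomputable def dvec (p q : ℕ) : Fin 3 → (Fin 2 →₀ ℕ) :=
  ![Finsupp.single 0 (p + q), Finsupp.single 1 (p + q), Finsupp.single 0 p + Finsupp.single 1 q]

theorem wtS_zero (p q : ℕ) (w : Fin 3 →₀ ℕ) :
    wtS (dvec p q) w 0 = (p + q) * w 0 + p * w 2 := by
  rw [wtS, Finsupp.linearCombination_apply, Finsupp.sum_fintype _ _ (by simp)]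
  simp [Fin.sum_univ_three, dvec]
  ring

theorem wtS_one (p q : ℕ) (w : Fin 3 →₀ ℕ) :
    wtS (dvec p q) w 1 = (p + q) * w 1 + q * w 2 := by
  rw [wtS, Finsupp.linearCombination_apply, Finsupp.sum_fintype _ _ (by simp)]
  simp [Fin.sum_univ_three, dvec]
  ring

theorem degree_three (w : Fin 3 →₀ ℕ) : w.degree = w 0 + w 1 + w 2 := by
  rw [Finsupp.degree_eq_sum, Fin.sum_univ_three]

/-- exponent vector from three numbers -/
noncomputable def mkw (i j m : ℕ) : Fin 3 →₀ ℕ := Finsupp.equivFunOnFinite.symm ![i, j, m]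

@[simp] theorem mkw_zero (i j m : ℕ) : mkw i j m 0 = i := rfl
@[simp] theorem mkw_one (i j m : ℕ) : mkw i j m 1 = j := rfl
@[simp] theorem mkw_two (i j m : ℕ) : mkw i j m 2 = m := rfl

theorem share_mem {k : Type*} [Field k] {r : ℕ} (d : Fin r → (Fin 2 →₀ ℕ)) {n : ℕ}
    {e e' : Fin 2 →₀ ℕ} {w w' : Fin r →₀ ℕ} (hw : w.degree = n) (hw' : w'.degree = n)
    (h : e + wtS d w = e' + wtS d w') (i : Fin r) (hi : 0 < w i) (hi' : 0 < w' i) :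
    MvPolynomial.monomial w (MvPolynomial.monomial e (1 : k)) -
      MvPolynomial.monomial w' (MvPolynomial.monomial e' (1 : k)) ∈
        MvPolynomial.homogeneousSubmodule (Fin r) (MvPolynomial (Fin 2) k) 1 *
          reesRel (monGen k d) (n - 1) := by
  have aux : ∀ u : Fin r →₀ ℕ, 0 < u i → ∃ v, u = Finsupp.single i 1 + v := by
    intro u hu
    exact ⟨u - Finsupp.single i 1, (add_tsub_cancel_of_le (Finsupp.single_le_iff.mpr hu)).symm⟩
  obtain ⟨v, rfl⟩ := aux w hi
  obtain ⟨v', rfl⟩ := aux w' hi'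
  have aux2 : ∀ (u : Fin r →₀ ℕ) (c : MvPolynomial (Fin 2) k),
      MvPolynomial.monomial (Finsupp.single i 1 + u) c =
        MvPolynomial.X i * MvPolynomial.monomial u c := by
    intro u c
    rw [MvPolynomial.X, MvPolynomial.monomial_mul, one_mul]
  rw [aux2, aux2, ← mul_sub]
  rw [map_add, Finsupp.degree_single] at hw hw'
  refine Submodule.mul_mem_mul ?_ (binom_mem d (by omega) (by omega) ?_)
  · exact (MvPolynomial.mem_homogeneousSubmodule _ _).2 (MvPolynomial.isHomogeneous_X _ _)
  · rw [map_add, map_add, add_left_comm, add_left_comm e'] at h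
    exact add_left_cancel h

theorem exists_inter {p q n : ℕ} (hn : 2 ≤ n) (H : InterCond p q n) (i j m i' j' m' : ℕ)
    (h : i + j + m = n) (h' : i' + j' + m' = n) :
    ∃ a b c : ℕ, a + b + c = n ∧
      ((0 < i ∧ 0 < a) ∨ (0 < j ∧ 0 < b) ∨ (0 < m ∧ 0 < c)) ∧
      ((0 < i' ∧ 0 < a) ∨ (0 < j' ∧ 0 < b) ∨ (0 < m' ∧ 0 < c)) ∧
      (p + q) * a + p * c ≤ max ((p + q) * i + p * m) ((p + q) * i' + p * m') ∧
      (p + q) * b + q * c ≤ max ((p + q) * j + q * m) ((p + q) * j' + q * m') := by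
  have main : ∀ i j m i' j' m' : ℕ, i + j + m = n → i' + j' + m' = n →
      ((0 < i ∧ 0 < i') ∨ (0 < j ∧ 0 < j') ∨ (0 < m ∧ 0 < m') ∨ (j = 0 ∧ m = 0 ∧ i' = 0) ∨
        (i = 0 ∧ m = 0 ∧ j' = 0) ∨ (i = 0 ∧ j = 0 ∧ m' = 0 ∧ 0 < i' ∧ 0 < j')) →
      ∃ a b c : ℕ, a + b + c = n ∧
      ((0 < i ∧ 0 < a) ∨ (0 < j ∧ 0 < b) ∨ (0 < m ∧ 0 < c)) ∧
      ((0 < i' ∧ 0 < a) ∨ (0 < j' ∧ 0 < b) ∨ (0 < m' ∧ 0 < c)) ∧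
      (p + q) * a + p * c ≤ max ((p + q) * i + p * m) ((p + q) * i' + p * m') ∧
      (p + q) * b + q * c ≤ max ((p + q) * j + q * m) ((p + q) * j' + q * m') := by
    clear h h' i j m i' j' m'
    intro i j m i' j' m' h h' hc
    have same : ((0 < i ∧ 0 < i') ∨ (0 < j ∧ 0 < j') ∨ (0 < m ∧ 0 < m')) →
      ∃ a b c : ℕ, a + b + c = n ∧
      ((0 < i ∧ 0 < a) ∨ (0 < j ∧ 0 < b) ∨ (0 < m ∧ 0 < c)) ∧
      ((0 < i' ∧ 0 < a) ∨ (0 < j' ∧ 0 < b) ∨ (0 < m' ∧ 0 < c)) ∧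
      (p + q) * a + p * c ≤ max ((p + q) * i + p * m) ((p + q) * i' + p * m') ∧
      (p + q) * b + q * c ≤ max ((p + q) * j + q * m) ((p + q) * j' + q * m') := fun hs =>
      ⟨i, j, m, h, by omega, by omega, le_max_left _ _, le_max_left _ _⟩
    rcases hc with hc | hc | hc | ⟨rfl, rfl, rfl⟩ | ⟨rfl, rfl, rfl⟩ | ⟨rfl, rfl, rfl, hi, hj⟩
    · exact same (by omega)
    · exact same (by omega)
    · exact same (by omega)
    · obtain ⟨s, rfl⟩ : ∃ s, n = s + 2 := ⟨n - 2, by omega⟩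
      obtain rfl : i = s + 2 := by omega
      rcases Nat.eq_zero_or_pos m' with rfl | hm
      · refine ⟨1, s + 1, 0, by omega, by omega, by omega, le_max_of_le_left ?_,
          le_max_of_le_right ?_⟩
        · nlinarith
        · have : j' = s + 2 := by omega
          subst this
          nlinarith
      · refine ⟨s + 1, 0, 1, by omega, by omega, by omega, le_max_of_le_left ?_,
          le_max_of_le_right ?_⟩
        · nlinarith
        · nlinarith [Nat.zero_le ((p + q) * j')]
    · obtain ⟨s, rfl⟩ : ∃ s, n = s + 2 := ⟨n - 2, by omega⟩
      obtain rfl : j = s + 2 := by omega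
      rcases Nat.eq_zero_or_pos m' with rfl | hm
      · refine ⟨s + 1, 1, 0, by omega, by omega, by omega, le_max_of_le_right ?_,
          le_max_of_le_left ?_⟩
        · have : i' = s + 2 := by omega
          subst this
          nlinarith
        · nlinarith
      · refine ⟨0, s + 1, 1, by omega, by omega, by omega, le_max_of_le_right ?_,
          le_max_of_le_left ?_⟩
        · nlinarith [Nat.zero_le ((p + q) * i')]
        · nlinarith
    · obtain ⟨a, b, c, h1, h2, h3, h4, h5⟩ := H i' j' hi hj (by omega)
      obtain rfl : m = n := by omega
      refine ⟨a, b, c, h1, by omega, by omega, ?_, ?_⟩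
      · simpa [max_comm] using h4
      · simpa [max_comm] using h5
  by_cases hc : ((0 < i ∧ 0 < i') ∨ (0 < j ∧ 0 < j') ∨ (0 < m ∧ 0 < m') ∨
      (j = 0 ∧ m = 0 ∧ i' = 0) ∨
        (i = 0 ∧ m = 0 ∧ j' = 0) ∨ (i = 0 ∧ j = 0 ∧ m' = 0 ∧ 0 < i' ∧ 0 < j'))
  · exact main i j m i' j' m' h h' hc
  · obtain ⟨a, b, c, h1, h2, h3, h4, h5⟩ := main i' j' m' i j m h' h (by omega)
    exact ⟨a, b, c, h1, h3, h2, by rwa [max_comm], by rwa [max_comm]⟩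

theorem stable_of_inter {k : Type*} [Field k] {p q n : ℕ} (hn : 2 ≤ n) (H : InterCond p q n) :
    reesRelStable (monGen k (dvec p q)) n := by
  apply stable_of _ (by omega)
  intro e e' w w' hw hw' h
  obtain ⟨a, b, c, h1, h2, h3, h4, h5⟩ := exists_inter hn H (w 0) (w 1) (w 2) (w' 0) (w' 1) (w' 2)
    (by rw [← degree_three, hw]) (by rw [← degree_three, hw'])
  have hv : (mkw a b c).degree = n := by rw [degree_three]; simpa using h1
  have hle : wtS (dvec p q) (mkw a b c) ≤ e + wtS (dvec p q) w := by
    have e0 := DFunLike.congr_fun h 0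
    have e1 := DFunLike.congr_fun h 1
    rw [Finsupp.add_apply, Finsupp.add_apply, wtS_zero, wtS_zero] at e0
    rw [Finsupp.add_apply, Finsupp.add_apply, wtS_one, wtS_one] at e1
    intro z
    fin_cases z
    · change wtS (dvec p q) (mkw a b c) 0 ≤ (e + wtS (dvec p q) w) 0
      rw [Finsupp.add_apply, wtS_zero, wtS_zero, mkw_zero, mkw_two]
      omega
    · change wtS (dvec p q) (mkw a b c) 1 ≤ (e + wtS (dvec p q) w) 1
      rw [Finsupp.add_apply, wtS_one, wtS_one, mkw_one, mkw_two]
      omega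
  obtain ⟨e'', he''⟩ := exists_add_of_le hle
  rw [add_comm (wtS _ _) e''] at he''
  rw [← sub_add_sub_cancel _
    (MvPolynomial.monomial (mkw a b c) (MvPolynomial.monomial e'' (1 : k)))]
  refine Submodule.add_mem _ ?_ ?_
  · rcases h2 with ⟨x, y⟩ | ⟨x, y⟩ | ⟨x, y⟩
    · exact share_mem _ hw hv he'' 0 x y
    · exact share_mem _ hw hv he'' 1 x y
    · exact share_mem _ hw hv he'' 2 x y
  · rcases h3 with ⟨x, y⟩ | ⟨x, y⟩ | ⟨x, y⟩
    · exact share_mem _ hv hw' (he''.symm.trans h) 0 y x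
    · exact share_mem _ hv hw' (he''.symm.trans h) 1 y x
    · exact share_mem _ hv hw' (he''.symm.trans h) 2 y x

theorem single_two_apply (n : ℕ) : (Finsupp.single (2 : Fin 3) n) 0 = 0 ∧
    (Finsupp.single (2 : Fin 3) n) 1 = 0 ∧ (Finsupp.single (2 : Fin 3) n) 2 = n := by
  refine ⟨?_, ?_, ?_⟩ <;> simp

theorem unstable_fib {k : Type*} [Field k] (t s : ℕ) :
    ¬ reesRelStable (monGen k (dvec (Nat.fib (t + s + 1)) (Nat.fib (t + s + 2))))
      (Nat.fib (t + 3)) := by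
  have hrec := record_fib t s
  have hF : Nat.fib (t + 3) = Nat.fib (t + 1) + Nat.fib (t + 2) := Nat.fib_add_two
  have hN : Nat.fib (t + s + 3) = Nat.fib (t + s + 1) + Nat.fib (t + s + 2) := Nat.fib_add_two
  have hpos : 0 < Nat.fib (t + 3) := Nat.fib_pos.mpr (by omega)
  have hpos1 : 0 < Nat.fib (t + 1) := Nat.fib_pos.mpr (by omega)
  rw [hN] at hrec
  generalize Nat.fib (t + s + 1) = p at *
  generalize Nat.fib (t + s + 2) = q at *
  generalize Nat.fib (t + 3) = n at *
  generalize Nat.fib (t + 1) = a at *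
  generalize Nat.fib (t + 2) = b at *
  clear hN
  obtain ⟨s0, s1, s2⟩ := single_two_apply n
  set W := wtS (dvec p q) (Finsupp.single 2 n) with hW
  set W' := wtS (dvec p q) (mkw a b 0) with hW'
  have hW0 : W 0 = p * n := by rw [hW, wtS_zero, s0, s2]; ring
  have hW1 : W 1 = q * n := by rw [hW, wtS_one, s1, s2]; ring
  have hW0' : W' 0 = (p + q) * a := by rw [hW', wtS_zero, mkw_zero, mkw_two]; ring
  have hW1' : W' 1 = (p + q) * b := by rw [hW', wtS_one, mkw_one, mkw_two]; ring
  have hsup : (W ⊔ W' - W) + W = (W ⊔ W' - W') + W' := by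
    rw [tsub_add_cancel_of_le le_sup_left, tsub_add_cancel_of_le le_sup_right]
  refine unstable_of _ hpos 2 (W ⊔ W' - W) (W ⊔ W' - W') (mkw a b 0) ?_ ?_ hsup ?_
  · rw [degree_three]; simp [hF]
  · intro h
    have := DFunLike.congr_fun h 0
    rw [s0, mkw_zero] at this
    omega
  · intro v hv hv2 hle
    rw [← hW, tsub_add_cancel_of_le le_sup_left] at hle
    have l0 := hle 0
    have l1 := hle 1
    rw [Finsupp.sup_apply, hW0, hW0', wtS_zero] at l0
    rw [Finsupp.sup_apply, hW1, hW1', wtS_one] at l1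
    rw [degree_three] at hv
    by_cases hvn : v 2 = n
    · ext z
      fin_cases z
      · change v 0 = _
        refine Eq.trans ?_ s0.symm
        omega
      · change v 1 = _
        refine Eq.trans ?_ s1.symm
        omega
      · exact hvn.trans s2.symm
    · exfalso
      refine hrec (v 2) (a - v 0) hv2 (by omega) ?_
      subst hF
      zify at l0 l1 hv ⊢
      generalize ((v 0 : ℕ) : ℤ) = x at *
      generalize ((v 1 : ℕ) : ℤ) = y at *
      generalize ((v 2 : ℕ) : ℤ) = z at *
      obtain rfl : y = a + b - x - z := by linarith
      rcases le_total ((p : ℤ) * (a + b)) ((p + q) * a) with h | h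
      · right
        rw [max_eq_right h] at l0
        rw [max_eq_left (by linarith)] at l1
        constructor <;> linarith
      · left
        rw [max_eq_left h] at l0
        rw [max_eq_right (by linarith)] at l1
        constructor <;> linarith

theorem stable_nonfib {k : Type*} [Field k] (ℓ n : ℕ) (hℓ : 4 ≤ ℓ) (hn : 2 ≤ n)
    (hnf : n ∉ Nat.fib '' Set.Icc 2 (ℓ + 2)) :
    reesRelStable (monGen k (dvec (Nat.fib ℓ) (Nat.fib (ℓ + 1)))) n := by
  apply stable_of_inter hn
  have hF : Nat.fib (ℓ + 2) = Nat.fib ℓ + Nat.fib (ℓ + 1) := Nat.fib_add_two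
  have hne : ∀ i, 2 ≤ i → i ≤ ℓ + 2 → n ≠ Nat.fib i := fun i h1 h2 h3 =>
    hnf ⟨i, ⟨h1, h2⟩, h3.symm⟩
  rcases lt_trichotomy n (Nat.fib (ℓ + 2)) with h | h | h
  · obtain ⟨i, hi1, hi2⟩ : ∃ i, Nat.fib i ≤ n ∧ n < Nat.fib (i + 1) :=
      ⟨Nat.greatestFib n, Nat.fib_greatestFib_le n, Nat.lt_fib_greatestFib_add_one n⟩
    have hi3 : i < ℓ + 2 := by
      by_contra hc
      have := Nat.fib_mono (not_lt.mp hc)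
      omega
    have hi4 : 3 ≤ i := by
      by_contra hc
      have := Nat.fib_mono (show i + 1 ≤ 3 by omega)
      have h3 : Nat.fib 3 = 2 := rfl
      omega
    have := hne i (by omega) (by omega)
    obtain ⟨t, rfl⟩ : ∃ t, i = t + 3 := ⟨i - 3, by omega⟩
    obtain ⟨s, rfl⟩ : ∃ s, ℓ = t + s + 2 := ⟨ℓ - t - 2, by omega⟩
    exact inter_fib t s n (by omega) hi2
  · exact absurd h (hne _ (by omega) le_rfl)
  · exact inter_big _ _ _ (Nat.fib_pos.mpr (by omega)) (by omega)

theorem stable_iff {k : Type*} [Field k] (ℓ n : ℕ) (hℓ : 4 ≤ ℓ) (hn : 2 ≤ n) :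
    ¬ reesRelStable (monGen k (dvec (Nat.fib ℓ) (Nat.fib (ℓ + 1)))) n ↔
      n ∈ Nat.fib '' Set.Icc 2 (ℓ + 2) := by
  constructor
  · intro h
    by_contra hc
    exact h (stable_nonfib ℓ n hℓ hn hc)
  · rintro ⟨i, ⟨h1, h2⟩, rfl⟩
    have hi : 3 ≤ i := by
      by_contra hc
      obtain rfl : i = 2 := by omega
      simp at hn
    obtain ⟨t, rfl⟩ : ∃ t, i = t + 3 := ⟨i - 3, by omega⟩
    obtain ⟨s, rfl⟩ : ∃ s, ℓ = t + s + 1 := ⟨ℓ - t - 1, by omega⟩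
    exact unstable_fib t s

/-- Let `(Fᵢ)` be the Fibonacci sequence, `A = k[a₁,a₂]`, `ℓ ≥ 4`, and
`I = (a₁^{F_{ℓ+2}}, a₂^{F_{ℓ+2}}, a₁^{F_ℓ}a₂^{F_{ℓ+1}})`. Then
`SD(I) = {Fᵢ : 2 ≤ i ≤ ℓ+2}`; consequently `st(I) = ℓ+1` and `rt(I) = F_{ℓ+2}`. -/
theorem stmt_19 {k : Type*} [Field k] (ℓ : ℕ) (hℓ : 4 ≤ ℓ) :
    let a₁ : MvPolynomial (Fin 2) k := MvPolynomial.X 0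
    let a₂ : MvPolynomial (Fin 2) k := MvPolynomial.X 1
    let x : Fin 3 → MvPolynomial (Fin 2) k :=
      ![a₁ ^ Nat.fib (ℓ + 2), a₂ ^ Nat.fib (ℓ + 2),
        a₁ ^ Nat.fib ℓ * a₂ ^ Nat.fib (ℓ + 1)]
    siftedDegrees x = Nat.fib '' Set.Icc 2 (ℓ + 2) ∧
    siftedType x = ℓ + 1 ∧
    relType x = Nat.fib (ℓ + 2) := by

  intro a₁ a₂ x
  have hx : x = monGen k (dvec (Nat.fib ℓ) (Nat.fib (ℓ + 1))) := by
    have hF : Nat.fib (ℓ + 2) = Nat.fib ℓ + Nat.fib (ℓ + 1) := Nat.fib_add_two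
    funext i
    fin_cases i
    · simp [x, a₁, monGen, dvec, MvPolynomial.X_pow_eq_monomial, hF]
    · simp [x, a₂, monGen, dvec, MvPolynomial.X_pow_eq_monomial, hF]
    · simp [x, a₁, a₂, monGen, dvec, MvPolynomial.X_pow_eq_monomial, MvPolynomial.monomial_mul]
  rw [hx]
  clear_value x
  have hSD : siftedDegrees (monGen k (dvec (Nat.fib ℓ) (Nat.fib (ℓ + 1)))) =
      Nat.fib '' Set.Icc 2 (ℓ + 2) := by
    ext n
    constructor
    · rintro (h | ⟨h1, h2⟩)
      · exact ⟨2, ⟨le_rfl, by omega⟩, by rw [Set.mem_singleton_iff.mp h]; rfl⟩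
      · exact (stable_iff ℓ n hℓ h1).1 h2
    · intro h
      rcases lt_or_ge n 2 with hn | hn
      · left
        obtain ⟨i, ⟨h1, h2⟩, rfl⟩ := h
        have : 0 < Nat.fib i := Nat.fib_pos.mpr (by omega)
        rw [Set.mem_singleton_iff]
        omega
      · exact Or.inr ⟨hn, (stable_iff ℓ n hℓ hn).2 h⟩
  have hbig : 2 ≤ Nat.fib (ℓ + 2) := Nat.fib_mono (show 3 ≤ ℓ + 2 by omega)
  refine ⟨hSD, ?_, ?_⟩
  · rw [siftedType, hSD, Set.InjOn.ncard_image]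
    · rw [Set.ncard_eq_toFinset_card', Set.toFinset_Icc, Nat.card_Icc]
      omega
    · intro i hi j hj hij
      have h2 : StrictMonoOn Nat.fib (Set.Ici 2) := Nat.fib_strictMonoOn
      exact h2.injOn hi.1 hj.1 hij
  · rw [relType]
    apply le_antisymm
    · apply Nat.sInf_le
      refine ⟨by omega, fun n hn => ?_⟩
      apply stable_nonfib ℓ n hℓ (by omega)
      rintro ⟨i, ⟨h1, h2⟩, rfl⟩
      have := Nat.fib_mono h2
      omega
    · apply le_csInf
      · refine ⟨Nat.fib (ℓ + 2), by omega, fun n hn => ?_⟩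
        apply stable_nonfib ℓ n hℓ (by omega)
        rintro ⟨i, ⟨h1, h2⟩, rfl⟩
        have := Nat.fib_mono h2
        omega
      · rintro s ⟨hs1, hs2⟩
        by_contra hc
        exact (stable_iff ℓ _ hℓ hbig).2 ⟨ℓ + 2, ⟨by omega, le_rfl⟩, rfl⟩ (hs2 _ (by omega))
end
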